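/- arXiv:2310.07520 — 11 statements merged into one kernel-verified Lean document; each statement's English description precedes it below -/
import Mathlib

section
/- Let n be an odd positive integer that is not divisible by 3, and let G be a finite group of order 3n. Then G has a normal subgroup N of order n and a subgroup H of order 3 such that N ∩ H is trivial and N·H = G (equivalently, H is a complement of N, so G is an internal semidirect product N ⋊ H with H ≅ ℤ/3ℤ). -/
/-!
A Sylow `p`-subgroup `P` of a group of order `p * n` with `p ∤ n` is cyclic of order `p`.
Since `P` is abelian, `N(P) / C(P)` has order dividing `[G : P] = n`; it also embeds in `Aut P`,
of order `p - 1`. If `n` is coprime to `p - 1`, then `N(P) = C(P)`, and Burnside's transfer theorem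
provides a normal complement of `P`. For `p = 3` the condition on `n` is coprimality to `6`.
-/

open Subgroup

section NormalizerCentralizer

variable {G : Type*} [Group G]

theorem relIndex_centralizer_normalizer_dvd_card_mulAut (H : Subgroup G) :
    (centralizer (H : Set G)).relIndex (normalizer (H : Set G)) ∣ Nat.card (MulAut H) := by
  rw [relIndex, ← normalizerMonoidHom_ker, index_ker]
  exact card_subgroup_dvd_card _

theorem relIndex_centralizer_normalizer_dvd_index (H : Subgroup G) [IsMulCommutative H] :
    (centralizer (H : Set G)).relIndex (normalizer (H : Set G)) ∣ H.index :=
  (relIndex_dvd_of_le_left _ H.le_centralizer).trans (relIndex_dvd_index_of_le le_normalizer)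

theorem normalizer_le_centralizer_of_coprime_index_card_mulAut (H : Subgroup G)
    [IsMulCommutative H] (h : H.index.Coprime (Nat.card (MulAut H))) :
    normalizer (H : Set G) ≤ centralizer (H : Set G) :=
  relIndex_eq_one.mp <| Nat.eq_one_of_dvd_coprimes h
    (relIndex_centralizer_normalizer_dvd_index H)
    (relIndex_centralizer_normalizer_dvd_card_mulAut H)

end NormalizerCentralizer

section Sylow

variable {G : Type*} [Group G] {p : ℕ} [Fact p.Prime]

theorem exists_normal_isComplement'_sylow_of_coprime [Finite (Sylow p G)] (P : Sylow p G)
    [P.FiniteIndex] [IsMulCommutative P] (h : P.index.Coprime (Nat.card (MulAut P))) :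
    ∃ N : Subgroup G, N.Normal ∧ N.IsComplement' P :=
  have hP := normalizer_le_centralizer_of_coprime_index_card_mulAut (P : Subgroup G) h
  ⟨_, inferInstance, MonoidHom.ker_transferSylow_isComplement' P hP⟩

theorem card_sylow_eq_pow_of_card_eq_pow_mul [Finite G] (P : Sylow p G) {k n : ℕ}
    (hcard : Nat.card G = p ^ k * n) (hpn : ¬ p ∣ n) : Nat.card P = p ^ k := by
  have hp : p.Prime := Fact.out
  have hn : n ≠ 0 := fun h => hpn (h ▸ dvd_zero p)
  rw [P.card_eq_multiplicity, hcard, Nat.factorization_mul (pow_ne_zero k hp.ne_zero) hn,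
    Finsupp.add_apply, hp.factorization_pow, Finsupp.single_eq_same,
    Nat.factorization_eq_zero_of_not_dvd hpn, add_zero]

end Sylow

theorem odd_order_3n_splits_general {p n : ℕ} (hp : p.Prime) (hn : n.Coprime (p * (p - 1)))
    {G : Type*} [Group G] (hcard : Nat.card G = p * n) :
    ∃ N H : Subgroup G, N.Normal ∧ Nat.card N = n ∧ Nat.card H = p ∧ N.IsComplement' H := by
  have : Fact p.Prime := ⟨hp⟩
  have hpn : ¬ p ∣ n := hp.coprime_iff_not_dvd.mp hn.coprime_mul_right_right.symm
  have hn0 : n ≠ 0 := fun h => hpn (h ▸ dvd_zero p)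
  have : Finite G := Nat.finite_of_card_ne_zero (hcard ▸ mul_ne_zero hp.ne_zero hn0)
  obtain ⟨P⟩ : Nonempty (Sylow p G) := inferInstance
  have hP : Nat.card P = p := by
    rw [card_sylow_eq_pow_of_card_eq_pow_mul P (k := 1) (by rwa [pow_one]) hpn, pow_one]
  have hcyclic : IsCyclic P := isCyclic_of_prime_card hP
  have hindex : P.index = n :=
    Nat.eq_of_mul_eq_mul_left hp.pos (by rw [← hcard, ← P.card_mul_index, hP])
  have haut : Nat.card (MulAut P) = p - 1 := by
    rw [IsCyclic.card_mulAut, hP, Nat.totient_prime hp]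
  obtain ⟨N, hN, hNP⟩ := exists_normal_isComplement'_sylow_of_coprime P
    (by rw [hindex, haut]; exact hn.coprime_mul_left_right)
  exact ⟨N, P, hN, hNP.index_eq_card.symm.trans hindex, hP, hNP⟩

/-- Let `n` be an odd positive integer not divisible by 3, and `G` a finite group of
order `3n`. Then `G` has a normal subgroup `N` of order `n` and a subgroup `H` of
order 3 which is a complement of `N` (so `N ⊓ H = ⊥` and `N * H = G`). -/
theorem odd_order_3n_splits (n : ℕ) (hn : 0 < n) (hodd : Odd n) (h3 : ¬ (3 ∣ n))
    (G : Type*) [Group G] [Finite G] (hcard : Nat.card G = 3 * n) :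
    ∃ (N H : Subgroup G), N.Normal ∧ Nat.card N = n ∧ Nat.card H = 3 ∧
      N.IsComplement' H := by
  have hcoprime : n.Coprime 3 := (Nat.prime_three.coprime_iff_not_dvd.mpr h3).symm
  exact odd_order_3n_splits_general Nat.prime_three
    (hcoprime.mul_right (Nat.coprime_two_right.mpr hodd)) hcard
end

section
/- Let n ≥ 3 be an odd integer and let m₁ ≤ m₂ ≤ m₃ be integers, each at least 2 and each dividing 9n, satisfying 1/m₁ + 1/m₂ + 1/m₃ = 1/3 + 2/(9n). Then either (m₁, m₂, m₃) = (3, 9n, 9n), or (n, m₁, m₂, m₃) is one of the six sporadic solutions: (5; 5, 9, 15), (15; 5, 9, 27), (35; 5, 9, 35), (65; 5, 9, 39), (215; 5, 9, 43), (7; 7, 9, 9). -/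
/-!
Put `aᵢ = 9n / mᵢ`. Since `9n` is odd, so are `mᵢ` and `aᵢ`, and multiplying the equation by `9n`
turns it into `a₁ + a₂ + a₃ = 3n + 2` with `a₁ ≥ a₂ ≥ a₃ ≥ 1`. Hence `9n < 3(a₁ + a₂ + a₃) ≤ 9a₁`,
so `m₁ ∈ {3, 5, 7}`. If `m₁ = 3` then `a₁ = 3n`, which leaves `a₂ + a₃ = 2`. Otherwise
`a₃ ≤ a₂` bounds `m₂`. Once `m₁` and `m₂` are known, `n` is a multiple `d * b` of a constant and
`a₃ = p * b + 2` with `p` constant: for `(m₁, m₂) = (5, 5), (5, 7)` the slope `p` is negative and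
`a₃` cannot be positive, and in all other cases `a₃` is coprime to the odd number `b`, so that
`a₃` divides the constant `9 * d` and only finitely many `b` remain.
-/

lemma odd_of_dvd_of_odd {k m : ℤ} (hk : Odd k) (h : m ∣ k) : Odd m := by
  obtain ⟨a, rfl⟩ := h
  exact (Int.odd_mul.mp hk).1

lemma one_div_eq_div_of_eq_mul {K : Type*} [Field K] {N m a : K} (hN : N ≠ 0) (h : N = m * a) :
    1 / m = a / N := by
  have hm : m ≠ 0 := left_ne_zero_of_mul (h ▸ hN)
  rw [div_eq_div_iff hm hN, one_mul, h, mul_comm]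

lemma exists_pos_cofactor {R : Type*} [SemigroupWithZero R] [Preorder R] [PosMulReflectLT R]
    {N m : R} (hN : 0 < N) (hm : 0 < m) (h : m ∣ N) : ∃ a, 0 < a ∧ N = m * a := by
  obtain ⟨a, rfl⟩ := h
  exact ⟨a, pos_of_mul_pos_right hN hm.le, rfl⟩

lemma cofactor_le_cofactor {R : Type*} [Mul R] [Zero R] [Preorder R] [MulPosMono R]
    [PosMulReflectLE R] {m m' a a' : R} (hm : 0 < m) (ha' : 0 ≤ a') (hmm' : m ≤ m')
    (h : m * a = m' * a') : a' ≤ a :=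
  le_of_mul_le_mul_left ((mul_le_mul_of_nonneg_right hmm' ha').trans_eq h.symm) hm

lemma dvd_of_mul_add_dvd_mul {R : Type*} [CommRing R] {b c p q : R} (hcb : IsCoprime c b)
    (h : p * b + c ∣ q * b) : p * b + c ∣ q :=
  (hcb.mul_add_right_left p).dvd_of_dvd_mul_right h

section Cofactors

variable {n m₁ m₂ m₃ a₁ a₂ a₃ : ℤ}

lemma sum_cofactors_eq (hn : n ≠ 0) (h₁ : 9 * n = m₁ * a₁) (h₂ : 9 * n = m₂ * a₂)
    (h₃ : 9 * n = m₃ * a₃)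
    (heq : (1 : ℚ) / (m₁ : ℚ) + 1 / (m₂ : ℚ) + 1 / (m₃ : ℚ) = 1 / 3 + 2 / (9 * (n : ℚ))) :
    a₁ + a₂ + a₃ = 3 * n + 2 := by
  have hnq : (n : ℚ) ≠ 0 := mod_cast hn
  have hN : (9 * n : ℚ) ≠ 0 := mul_ne_zero (by norm_num) hnq
  have hm₁ : (1 : ℚ) / m₁ = a₁ / (9 * n) := one_div_eq_div_of_eq_mul hN (mod_cast h₁)
  have hm₂ : (1 : ℚ) / m₂ = a₂ / (9 * n) := one_div_eq_div_of_eq_mul hN (mod_cast h₂)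
  have hm₃ : (1 : ℚ) / m₃ = a₃ / (9 * n) := one_div_eq_div_of_eq_mul hN (mod_cast h₃)
  rw [hm₁, hm₂, hm₃] at heq
  field_simp at heq
  have : (a₁ + a₂ + a₃ : ℚ) = 3 * n + 2 := by linarith
  exact_mod_cast this

lemma first_period_lt_nine (hn : 0 < n) (h₁ : 9 * n = m₁ * a₁) (h₂₁ : a₂ ≤ a₁) (h₃₂ : a₃ ≤ a₂)
    (hsum : a₁ + a₂ + a₃ = 3 * n + 2) : m₁ < 9 := by
  have h : m₁ * a₁ < 9 * a₁ := by omega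
  exact lt_of_mul_lt_mul_right h (by omega)

lemma mul_second_period_lt (hm₁ : 0 < m₁) (ha₂ : 0 ≤ a₂) (h₁ : 9 * n = m₁ * a₁)
    (h₂ : 9 * n = m₂ * a₂) (h₃₂ : a₃ ≤ a₂) (hsum : a₁ + a₂ + a₃ = 3 * n + 2) :
    (m₁ - 3) * m₂ < 6 * m₁ := by
  refine lt_of_mul_lt_mul_right ?_ ha₂
  calc
    (m₁ - 3) * m₂ * a₂ = 3 * m₁ * (a₂ + a₃ - 2) := by
      linear_combination (3 - m₁) * h₂ - 3 * h₁ - 3 * m₁ * hsum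
    _ < 3 * m₁ * (2 * a₂) := by
      gcongr
      omega
    _ = 6 * m₁ * a₂ := by ring

lemma third_cofactor_dvd {b d p : ℤ} (hodd : Odd (d * b)) (h₃ : 9 * (d * b) = m₃ * a₃)
    (ha₃ : a₃ = p * b + 2) : a₃ ∣ 9 * d := by
  subst ha₃
  have hb : IsCoprime 2 b := Int.isCoprime_two_left.mpr (Int.odd_mul.mp hodd).2
  exact dvd_of_mul_add_dvd_mul hb ⟨m₃, by linear_combination h₃⟩

lemma eq_of_first_period_three (ha₂ : 0 < a₂) (ha₃ : 0 < a₃) (h₁ : 9 * n = 3 * a₁)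
    (h₂ : 9 * n = m₂ * a₂) (h₃ : 9 * n = m₃ * a₃) (hsum : a₁ + a₂ + a₃ = 3 * n + 2) :
    m₂ = 9 * n ∧ m₃ = 9 * n := by
  obtain ⟨rfl, rfl⟩ : a₂ = 1 ∧ a₃ = 1 := by omega
  omega

lemma eq_of_periods_five_nine (hn : 0 < n) (hodd : Odd n) (h₁ : 9 * n = 5 * a₁)
    (h₂ : 9 * n = 9 * a₂) (h₃ : 9 * n = m₃ * a₃) (hsum : a₁ + a₂ + a₃ = 3 * n + 2) :
    (n = 5 ∧ m₃ = 15) ∨ (n = 15 ∧ m₃ = 27) ∨ (n = 35 ∧ m₃ = 35) ∨ (n = 65 ∧ m₃ = 39) ∨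
      (n = 215 ∧ m₃ = 43) := by
  obtain ⟨b, rfl⟩ : 5 ∣ n := by omega
  obtain rfl : a₃ = b + 2 := by omega
  have hdvd : b + 2 ∣ 45 := third_cofactor_dvd (p := 1) hodd h₃ (by ring)
  have hb_pos : 0 < b := by omega
  have hb_le : b ≤ 43 := by linarith [Int.le_of_dvd (by norm_num) hdvd]
  interval_cases b <;> omega

lemma false_of_periods_five_eleven (hn : 0 < n) (hodd : Odd n) (h₁ : 9 * n = 5 * a₁)
    (h₂ : 9 * n = 11 * a₂) (h₃ : 9 * n = m₃ * a₃) (hsum : a₁ + a₂ + a₃ = 3 * n + 2) : False := by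
  obtain ⟨b, rfl⟩ : 55 ∣ n := by omega
  obtain rfl : a₃ = 21 * b + 2 := by omega
  have hdvd : 21 * b + 2 ∣ 495 := third_cofactor_dvd hodd h₃ rfl
  have hb_pos : 0 < b := by omega
  have hb_le : b ≤ 23 := by linarith [Int.le_of_dvd (by norm_num) hdvd]
  interval_cases b <;> omega

lemma false_of_periods_five_thirteen (hn : 0 < n) (hodd : Odd n) (h₁ : 9 * n = 5 * a₁)
    (h₂ : 9 * n = 13 * a₂) (h₃ : 9 * n = m₃ * a₃) (hsum : a₁ + a₂ + a₃ = 3 * n + 2) : False := by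
  obtain ⟨b, rfl⟩ : 65 ∣ n := by omega
  obtain rfl : a₃ = 33 * b + 2 := by omega
  have hdvd : 33 * b + 2 ∣ 585 := third_cofactor_dvd hodd h₃ rfl
  have hb_pos : 0 < b := by omega
  have hb_le : b ≤ 17 := by linarith [Int.le_of_dvd (by norm_num) hdvd]
  interval_cases b <;> omega

lemma false_of_periods_seven_seven (hn : 0 < n) (hodd : Odd n) (h₁ : 9 * n = 7 * a₁)
    (h₂ : 9 * n = 7 * a₂) (h₃ : 9 * n = m₃ * a₃) (hsum : a₁ + a₂ + a₃ = 3 * n + 2) : False := by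
  obtain ⟨b, rfl⟩ : 7 ∣ n := by omega
  obtain rfl : a₃ = 3 * b + 2 := by omega
  have hdvd : 3 * b + 2 ∣ 63 := third_cofactor_dvd hodd h₃ rfl
  have hb_pos : 0 < b := by omega
  have hb_le : b ≤ 20 := by linarith [Int.le_of_dvd (by norm_num) hdvd]
  interval_cases b <;> omega

lemma eq_of_periods_seven_nine (hn : 0 < n) (hodd : Odd n) (h₁ : 9 * n = 7 * a₁)
    (h₂ : 9 * n = 9 * a₂) (h₃ : 9 * n = m₃ * a₃) (hsum : a₁ + a₂ + a₃ = 3 * n + 2) :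
    n = 7 ∧ m₃ = 9 := by
  obtain ⟨b, rfl⟩ : 7 ∣ n := by omega
  obtain rfl : a₃ = 5 * b + 2 := by omega
  have hdvd : 5 * b + 2 ∣ 63 := third_cofactor_dvd hodd h₃ rfl
  have hb_pos : 0 < b := by omega
  have hb_le : b ≤ 12 := by linarith [Int.le_of_dvd (by norm_num) hdvd]
  interval_cases b <;> omega

lemma eq_of_first_period_five (hn : 0 < n) (hodd : Odd n) (hm₂ : 5 ≤ m₂) (hodd₂ : Odd m₂)
    (ha₃ : 0 < a₃) (h₃₂ : a₃ ≤ a₂) (h₁ : 9 * n = 5 * a₁) (h₂ : 9 * n = m₂ * a₂)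
    (h₃ : 9 * n = m₃ * a₃) (hsum : a₁ + a₂ + a₃ = 3 * n + 2) :
    m₂ = 9 ∧ ((n = 5 ∧ m₃ = 15) ∨ (n = 15 ∧ m₃ = 27) ∨ (n = 35 ∧ m₃ = 35) ∨
      (n = 65 ∧ m₃ = 39) ∨ (n = 215 ∧ m₃ = 43)) := by
  have hlt : (5 - 3) * m₂ < 6 * 5 :=
    mul_second_period_lt (by norm_num) (by omega) h₁ h₂ h₃₂ hsum
  obtain rfl | rfl | rfl | rfl | rfl : m₂ = 5 ∨ m₂ = 7 ∨ m₂ = 9 ∨ m₂ = 11 ∨ m₂ = 13 := by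
    rw [Int.odd_iff] at hodd₂
    omega
  · have : 5 * a₃ = 10 - 3 * n := by omega
    have : 5 ≤ n := by omega
    omega
  · have : 35 * a₃ = 70 - 3 * n := by omega
    have : 35 ≤ n := by omega
    omega
  · exact ⟨rfl, eq_of_periods_five_nine hn hodd h₁ h₂ h₃ hsum⟩
  · exact (false_of_periods_five_eleven hn hodd h₁ h₂ h₃ hsum).elim
  · exact (false_of_periods_five_thirteen hn hodd h₁ h₂ h₃ hsum).elim

lemma eq_of_first_period_seven (hn : 0 < n) (hodd : Odd n) (hm₂ : 7 ≤ m₂) (hodd₂ : Odd m₂)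
    (h₃₂ : a₃ ≤ a₂) (h₁ : 9 * n = 7 * a₁) (h₂ : 9 * n = m₂ * a₂)
    (h₃ : 9 * n = m₃ * a₃) (hsum : a₁ + a₂ + a₃ = 3 * n + 2) :
    n = 7 ∧ m₂ = 9 ∧ m₃ = 9 := by
  have hlt : (7 - 3) * m₂ < 6 * 7 :=
    mul_second_period_lt (by norm_num) (by omega) h₁ h₂ h₃₂ hsum
  obtain rfl | rfl : m₂ = 7 ∨ m₂ = 9 := by
    rw [Int.odd_iff] at hodd₂
    omega
  · exact (false_of_periods_seven_seven hn hodd h₁ h₂ h₃ hsum).elim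
  · obtain ⟨rfl, rfl⟩ := eq_of_periods_seven_nine hn hodd h₁ h₂ h₃ hsum
    exact ⟨rfl, rfl, rfl⟩

end Cofactors

/-- Solutions of `1/m₁ + 1/m₂ + 1/m₃ = 1/3 + 2/(9n)` with `n ≥ 3` odd,
`2 ≤ m₁ ≤ m₂ ≤ m₃` and each `mᵢ` dividing `9n`. -/
theorem signature_solutions_3g (n m₁ m₂ m₃ : ℤ) (hn : 3 ≤ n) (hodd : Odd n)
    (h1 : 2 ≤ m₁) (h12 : m₁ ≤ m₂) (h23 : m₂ ≤ m₃)
    (hd1 : m₁ ∣ 9 * n) (hd2 : m₂ ∣ 9 * n) (hd3 : m₃ ∣ 9 * n)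
    (heq : (1 : ℚ) / (m₁ : ℚ) + 1 / (m₂ : ℚ) + 1 / (m₃ : ℚ)
      = 1 / 3 + 2 / (9 * (n : ℚ))) :
    (m₁ = 3 ∧ m₂ = 9 * n ∧ m₃ = 9 * n) ∨
    (n, m₁, m₂, m₃) = (5, 5, 9, 15) ∨
    (n, m₁, m₂, m₃) = (15, 5, 9, 27) ∨
    (n, m₁, m₂, m₃) = (35, 5, 9, 35) ∨
    (n, m₁, m₂, m₃) = (65, 5, 9, 39) ∨
    (n, m₁, m₂, m₃) = (215, 5, 9, 43) ∨
    (n, m₁, m₂, m₃) = (7, 7, 9, 9) := by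
  have hn₀ : 0 < n := by omega
  have hodd₉ : Odd (9 * n) := (by decide : Odd (9 : ℤ)).mul hodd
  obtain ⟨a₁, -, h₁⟩ := exists_pos_cofactor (by omega) (by omega) hd1
  obtain ⟨a₂, ha₂, h₂⟩ := exists_pos_cofactor (by omega) (by omega) hd2
  obtain ⟨a₃, ha₃, h₃⟩ := exists_pos_cofactor (by omega) (by omega) hd3
  have h₂₁ : a₂ ≤ a₁ := cofactor_le_cofactor (by omega) ha₂.le h12 (h₁.symm.trans h₂)
  have h₃₂ : a₃ ≤ a₂ := cofactor_le_cofactor (by omega) ha₃.le h23 (h₂.symm.trans h₃)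
  have hsum := sum_cofactors_eq hn₀.ne' h₁ h₂ h₃ heq
  have hm₁ : m₁ < 9 := first_period_lt_nine hn₀ h₁ h₂₁ h₃₂ hsum
  obtain rfl | rfl | rfl : m₁ = 3 ∨ m₁ = 5 ∨ m₁ = 7 := by
    have := Int.odd_iff.mp (odd_of_dvd_of_odd hodd₉ hd1)
    omega
  · exact .inl ⟨rfl, eq_of_first_period_three ha₂ ha₃ h₁ h₂ h₃ hsum⟩
  · obtain ⟨rfl, h⟩ :=
      eq_of_first_period_five hn₀ hodd h12 (odd_of_dvd_of_odd hodd₉ hd2) ha₃ h₃₂ h₁ h₂ h₃ hsum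
    simpa using h
  · have :=
      eq_of_first_period_seven hn₀ hodd h12 (odd_of_dvd_of_odd hodd₉ hd2) h₃₂ h₁ h₂ h₃ hsum
    simp [this]
end

section
/- Let m ≥ 3 be an odd integer and let m₁ ≤ m₂ ≤ m₃ be integers, each at least 2 and each dividing 9m, satisfying 1/m₁ + 1/m₂ + 1/m₃ = 1/3 + 4/(9m). Then either (m₁, m₂, m₃) = (3, 3m, 9m), or (m, m₁, m₂, m₃) is one of the seven sporadic solutions: (5; 5, 5, 45), (5; 5, 9, 9), (35; 5, 7, 315), (25; 5, 9, 25), (55; 5, 9, 33), (205; 5, 9, 41), (7; 7, 7, 9). -/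
/-!
Since `m₁` is the smallest period, `1/3 < 3/m₁`, so the odd number `m₁` is `3`, `5` or `7`.

If `m₁ = 3`, then `1/m₂ + 1/m₃ = 4/(9m)`. Writing `9m = m₂b` with `b` odd turns this into
`m₃(4 - b) = 9m`, so `b` is `1` or `3`, and `m₂ ≤ m₃` leaves `b = 3`: the infinite family.

If `m₁` is `5` or `7`, then `1/3 - 1/m₁ < 2/m₂` leaves finitely many odd `m₂`. For each of them
write `9m = nk` with `n = lcm(9, m₁, m₂)`, and `1/3 - 1/m₁ - 1/m₂ = p/n`. The equation becomes
`m₃(pk + 4) = nk`. If `p < 0`, then `p = -3`, and positivity of `pk + 4` forces `k = 1`. If `p > 0`,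
then, as `k` is odd, `pk + 4` is coprime to `k` and hence divides the explicit number `n`, which
leaves finitely many `k`.
-/

section SizeBounds

variable {K : Type*} [Field K] [LinearOrder K] [IsStrictOrderedRing K] {s x y z : K}

theorem mul_lt_two_of_lt_one_div_add (hy : 0 < y) (hyz : y ≤ z) (h : s < 1 / y + 1 / z) :
    s * y < 2 := by
  have hz : 1 / z ≤ 1 / y := one_div_le_one_div_of_le hy hyz
  exact (lt_div_iff₀ hy).1 (by linear_combination h + hz)

theorem mul_lt_three_of_lt_one_div_add (hx : 0 < x) (hxy : x ≤ y) (hyz : y ≤ z)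
    (h : s < 1 / x + 1 / y + 1 / z) : s * x < 3 := by
  have hy : 1 / y ≤ 1 / x := one_div_le_one_div_of_le hx hxy
  have hz : 1 / z ≤ 1 / x := one_div_le_one_div_of_le hx (hxy.trans hyz)
  exact (lt_div_iff₀ hx).1 (by linear_combination h + hy + hz)

end SizeBounds

theorem add_dvd_of_mul_eq_mul {R : Type*} [CommRing R] {p q k n z : R} (hqk : IsCoprime q k)
    (h : z * (p * k + q) = n * k) : p * k + q ∣ n :=
  IsCoprime.dvd_of_dvd_mul_right (by simpa [add_comm] using hqk) (Dvd.intro_left z h)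

theorem isCoprime_four_of_odd {k : ℤ} (hk : Odd k) : IsCoprime 4 k := by
  have h : IsCoprime (2 ^ 2) k := (Int.isCoprime_two_left.2 hk).pow_left
  simpa using h

theorem mul_mul_add_eq_of_one_div_eq {p q n k z : ℤ} (hn : n ≠ 0) (hk : k ≠ 0) (hz : z ≠ 0)
    (h : (1 : ℚ) / z = p / n + q / (n * k)) : z * (p * k + q) = n * k := by
  field_simp at h
  exact_mod_cast h.symm

theorem eq_of_one_div_add_one_div_eq_four_div {n y z : ℤ} (hn : 0 < n) (hodd : Odd n)
    (hy : 0 < y) (hyz : y ≤ z) (hyn : y ∣ n) (h : (1 : ℚ) / y + 1 / z = 4 / n) :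
    n = 3 * y ∧ z = n := by
  obtain ⟨b, rfl⟩ := hyn
  have hb : 0 < b := pos_of_mul_pos_right hn hy.le
  have hz : 0 < z := hy.trans_le hyz
  have hbz : z * (-1 * b + 4) = y * b :=
    mul_mul_add_eq_of_one_div_eq hy.ne' hb.ne' hz.ne' (by push_cast at h ⊢; linear_combination h)
  have hb4 : 0 < -1 * b + 4 := pos_of_mul_pos_right (hbz ▸ hn) hz.le
  obtain ⟨c, hc⟩ : Odd b := (Int.odd_mul.1 hodd).2
  obtain rfl | rfl : b = 1 ∨ b = 3 := by omega
  all_goals omega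

theorem eq_one_and_eq_of_one_div_eq_neg_three {n k z : ℤ} (hn : 0 < n) (hk : 0 < k)
    (hz : 0 < z) (h : (1 : ℚ) / z = -3 / n + 4 / (n * k)) : k = 1 ∧ z = n := by
  have hmul : z * (-3 * k + 4) = n * k :=
    mul_mul_add_eq_of_one_div_eq hn.ne' hk.ne' hz.ne' (mod_cast h)
  have hpos : 0 < -3 * k + 4 := pos_of_mul_pos_right (hmul ▸ mul_pos hn hk) hz.le
  obtain rfl : k = 1 := by omega
  omega

theorem mul_eq_and_add_four_dvd_of_one_div_eq {p n k z : ℤ} (hn : n ≠ 0) (hk : Odd k) (hz : z ≠ 0)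
    (h : (1 : ℚ) / z = p / n + 4 / (n * k)) :
    z * (p * k + 4) = n * k ∧ p * k + 4 ∣ n := by
  have hk0 : k ≠ 0 := by
    rintro rfl
    simp at hk
  have hmul : z * (p * k + 4) = n * k := mul_mul_add_eq_of_one_div_eq hn hk0 hz (mod_cast h)
  exact ⟨hmul, add_dvd_of_mul_eq_mul (isCoprime_four_of_odd hk) hmul⟩

section ThirdPeriod

variable {m z : ℤ}

theorem third_period_of_five_five (hm : 0 < m) (h5 : 5 ∣ m) (hz : 0 < z)
    (heq : (1 : ℚ) / 5 + 1 / 5 + 1 / z = 1 / 3 + 4 / (9 * m)) : m = 5 ∧ z = 45 := by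
  obtain ⟨k, rfl⟩ := h5
  push_cast at heq
  have h := eq_one_and_eq_of_one_div_eq_neg_three (n := 45) (k := k) (by norm_num)
    (by omega) hz (by push_cast; linear_combination heq)
  omega

theorem third_period_of_five_seven (hm : 0 < m) (h35 : 35 ∣ m) (hz : 0 < z)
    (heq : (1 : ℚ) / 5 + 1 / 7 + 1 / z = 1 / 3 + 4 / (9 * m)) : m = 35 ∧ z = 315 := by
  obtain ⟨k, rfl⟩ := h35
  push_cast at heq
  have h := eq_one_and_eq_of_one_div_eq_neg_three (n := 315) (k := k) (by norm_num)
    (by omega) hz (by push_cast; linear_combination heq)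
  omega

theorem third_period_of_five_nine (hm : 0 < m) (hodd : Odd m) (h5 : 5 ∣ m) (hz : z ≠ 0)
    (heq : (1 : ℚ) / 5 + 1 / 9 + 1 / z = 1 / 3 + 4 / (9 * m)) :
    (m = 5 ∧ z = 9) ∨ (m = 25 ∧ z = 25) ∨ (m = 55 ∧ z = 33) ∨ (m = 205 ∧ z = 41) := by
  obtain ⟨k, rfl⟩ := h5
  push_cast at heq
  obtain ⟨hmul, hdvd⟩ := mul_eq_and_add_four_dvd_of_one_div_eq (p := 1) (n := 45) (by norm_num)
    (Int.odd_mul.1 hodd).2 hz (by push_cast; linear_combination heq)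
  have hk : k ≤ 41 := by linarith [Int.le_of_dvd (by norm_num) hdvd]
  have hk0 : 0 < k := by omega
  interval_cases k <;> omega

theorem not_third_period_of_five_eleven (hm : 0 < m) (hodd : Odd m) (h55 : 55 ∣ m) (hz : z ≠ 0) :
    (1 : ℚ) / 5 + 1 / 11 + 1 / z ≠ 1 / 3 + 4 / (9 * m) := by
  intro heq
  obtain ⟨k, rfl⟩ := h55
  push_cast at heq
  have hkodd : Odd k := (Int.odd_mul.1 hodd).2
  obtain ⟨hmul, hdvd⟩ := mul_eq_and_add_four_dvd_of_one_div_eq (p := 21) (n := 495) (by norm_num)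
    hkodd hz (by push_cast; linear_combination heq)
  have hk : k ≤ 23 := by linarith [Int.le_of_dvd (by norm_num) hdvd]
  have hk0 : 0 < k := by omega
  interval_cases k <;> omega

theorem not_third_period_of_five_thirteen (hm : 0 < m) (hodd : Odd m) (h65 : 65 ∣ m)
    (hz : z ≠ 0) : (1 : ℚ) / 5 + 1 / 13 + 1 / z ≠ 1 / 3 + 4 / (9 * m) := by
  intro heq
  obtain ⟨k, rfl⟩ := h65
  push_cast at heq
  have hkodd : Odd k := (Int.odd_mul.1 hodd).2
  obtain ⟨hmul, hdvd⟩ := mul_eq_and_add_four_dvd_of_one_div_eq (p := 33) (n := 585) (by norm_num)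
    hkodd hz (by push_cast; linear_combination heq)
  have hk : k ≤ 17 := by linarith [Int.le_of_dvd (by norm_num) hdvd]
  have hk0 : 0 < k := by omega
  interval_cases k <;> omega

theorem third_period_of_seven_seven (hm : 0 < m) (hodd : Odd m) (h7 : 7 ∣ m) (hz : z ≠ 0)
    (heq : (1 : ℚ) / 7 + 1 / 7 + 1 / z = 1 / 3 + 4 / (9 * m)) : m = 7 ∧ z = 9 := by
  obtain ⟨k, rfl⟩ := h7
  push_cast at heq
  obtain ⟨hmul, hdvd⟩ := mul_eq_and_add_four_dvd_of_one_div_eq (p := 3) (n := 63) (by norm_num)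
    (Int.odd_mul.1 hodd).2 hz (by push_cast; linear_combination heq)
  have hk : k ≤ 19 := by linarith [Int.le_of_dvd (by norm_num) hdvd]
  have hk0 : 0 < k := by omega
  interval_cases k <;> omega

theorem third_period_of_seven_nine (hm : 0 < m) (hodd : Odd m) (h7 : 7 ∣ m) (hz : z ≠ 0)
    (heq : (1 : ℚ) / 7 + 1 / 9 + 1 / z = 1 / 3 + 4 / (9 * m)) : m = 7 ∧ z = 7 := by
  obtain ⟨k, rfl⟩ := h7
  push_cast at heq
  obtain ⟨hmul, hdvd⟩ := mul_eq_and_add_four_dvd_of_one_div_eq (p := 5) (n := 63) (by norm_num)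
    (Int.odd_mul.1 hodd).2 hz (by push_cast; linear_combination heq)
  have hk : k ≤ 11 := by linarith [Int.le_of_dvd (by norm_num) hdvd]
  have hk0 : 0 < k := by omega
  interval_cases k <;> omega

end ThirdPeriod

theorem one_third_lt_one_third_add {m : ℤ} (hm : 0 < m) : (1 / 3 : ℚ) < 1 / 3 + 4 / (9 * m) := by
  have : (0 : ℚ) < m := mod_cast hm
  exact lt_add_of_pos_right _ (by positivity)

theorem odd_of_dvd_nine_mul {d m : ℤ} (hm : Odd m) (hd : d ∣ 9 * m) : Odd d := by
  obtain ⟨c, hc⟩ := hd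
  have h : Odd (9 * m) := Int.odd_mul.2 ⟨by decide, hm⟩
  exact (Int.odd_mul.1 (hc ▸ h)).1

section SmallestPeriod

variable {m x y z : ℤ}

theorem smallest_period_eq_three_or_five_or_seven (hm : 0 < m) (hodd : Odd m) (hx : 2 ≤ x)
    (hxy : x ≤ y) (hyz : y ≤ z) (hd : x ∣ 9 * m)
    (heq : (1 : ℚ) / x + 1 / y + 1 / z = 1 / 3 + 4 / (9 * m)) :
    x = 3 ∨ x = 5 ∨ x = 7 := by
  have hlt : (1 / 3 : ℚ) * x < 3 :=
    mul_lt_three_of_lt_one_div_add (mod_cast (by omega : 0 < x)) (mod_cast hxy) (mod_cast hyz)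
      (heq ▸ one_third_lt_one_third_add hm)
  have hx9 : x < 9 := by
    have : (x : ℚ) < 9 := by linarith
    exact_mod_cast this
  obtain ⟨j, hj⟩ := odd_of_dvd_nine_mul hodd hd
  omega

theorem solutions_of_smallest_eq_five (hm : 0 < m) (hodd : Odd m) (hy : 5 ≤ y) (hyz : y ≤ z)
    (h5 : 5 ∣ 9 * m) (hd : y ∣ 9 * m)
    (heq : (1 : ℚ) / 5 + 1 / y + 1 / z = 1 / 3 + 4 / (9 * m)) :
    (m, y, z) = (5, 5, 45) ∨ (m, y, z) = (5, 9, 9) ∨ (m, y, z) = (35, 7, 315) ∨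
    (m, y, z) = (25, 9, 25) ∨ (m, y, z) = (55, 9, 33) ∨ (m, y, z) = (205, 9, 41) := by
  have hlt : (2 / 15 : ℚ) * y < 2 :=
    mul_lt_two_of_lt_one_div_add (z := (z : ℚ)) (mod_cast (by omega : 0 < y)) (mod_cast hyz)
      (by linear_combination one_third_lt_one_third_add hm - heq)
  have hy15 : y < 15 := by
    have : (y : ℚ) < 15 := by linarith
    exact_mod_cast this
  have hz : 0 < z := by omega
  obtain ⟨j, hj⟩ := odd_of_dvd_nine_mul hodd hd
  obtain rfl | rfl | rfl | rfl | rfl : y = 5 ∨ y = 7 ∨ y = 9 ∨ y = 11 ∨ y = 13 := by omega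
  · obtain ⟨rfl, rfl⟩ := third_period_of_five_five hm (by omega) hz (by simpa using heq)
    simp
  · obtain ⟨rfl, rfl⟩ := third_period_of_five_seven hm (by omega) hz (by simpa using heq)
    simp
  · obtain ⟨rfl, rfl⟩ | ⟨rfl, rfl⟩ | ⟨rfl, rfl⟩ | ⟨rfl, rfl⟩ :=
      third_period_of_five_nine hm hodd (by omega) hz.ne' (by simpa using heq) <;> simp
  · exact absurd (by simpa using heq) (not_third_period_of_five_eleven hm hodd (by omega) hz.ne')
  · exact absurd (by simpa using heq) (not_third_period_of_five_thirteen hm hodd (by omega) hz.ne')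

theorem solution_of_smallest_eq_seven (hm : 0 < m) (hodd : Odd m) (hy : 7 ≤ y) (hyz : y ≤ z)
    (h7 : 7 ∣ 9 * m) (hd : y ∣ 9 * m)
    (heq : (1 : ℚ) / 7 + 1 / y + 1 / z = 1 / 3 + 4 / (9 * m)) : (m, y, z) = (7, 7, 9) := by
  have hlt : (4 / 21 : ℚ) * y < 2 :=
    mul_lt_two_of_lt_one_div_add (z := (z : ℚ)) (mod_cast (by omega : 0 < y)) (mod_cast hyz)
      (by linear_combination one_third_lt_one_third_add hm - heq)
  have hy11 : y < 11 := by
    have : (y : ℚ) < 11 := by linarith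
    exact_mod_cast this
  have hz : z ≠ 0 := by omega
  obtain ⟨j, hj⟩ := odd_of_dvd_nine_mul hodd hd
  obtain rfl | rfl : y = 7 ∨ y = 9 := by omega
  · obtain ⟨rfl, rfl⟩ := third_period_of_seven_seven hm hodd (by omega) hz (by simpa using heq)
    rfl
  · obtain ⟨-, rfl⟩ := third_period_of_seven_nine hm hodd (by omega) hz (by simpa using heq)
    omega

end SmallestPeriod

/-- Solutions of `1/m₁ + 1/m₂ + 1/m₃ = 1/3 + 4/(9m)` with `m ≥ 3` odd,
`2 ≤ m₁ ≤ m₂ ≤ m₃` and each `mᵢ` dividing `9m`. -/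
theorem signature_solutions_3g3 (m m₁ m₂ m₃ : ℤ) (hm : 3 ≤ m) (hodd : Odd m)
    (h1 : 2 ≤ m₁) (h12 : m₁ ≤ m₂) (h23 : m₂ ≤ m₃)
    (hd1 : m₁ ∣ 9 * m) (hd2 : m₂ ∣ 9 * m) (hd3 : m₃ ∣ 9 * m)
    (heq : (1 : ℚ) / (m₁ : ℚ) + 1 / (m₂ : ℚ) + 1 / (m₃ : ℚ)
      = 1 / 3 + 4 / (9 * (m : ℚ))) :
    (m₁ = 3 ∧ m₂ = 3 * m ∧ m₃ = 9 * m) ∨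
    (m, m₁, m₂, m₃) = (5, 5, 5, 45) ∨
    (m, m₁, m₂, m₃) = (5, 5, 9, 9) ∨
    (m, m₁, m₂, m₃) = (35, 5, 7, 315) ∨
    (m, m₁, m₂, m₃) = (25, 5, 9, 25) ∨
    (m, m₁, m₂, m₃) = (55, 5, 9, 33) ∨
    (m, m₁, m₂, m₃) = (205, 5, 9, 41) ∨
    (m, m₁, m₂, m₃) = (7, 7, 7, 9) := by
  have hm0 : 0 < m := by omega
  obtain rfl | rfl | rfl := smallest_period_eq_three_or_five_or_seven hm0 hodd h1 h12 h23 hd1 heq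
  · have hsum : (1 : ℚ) / m₂ + 1 / m₃ = 4 / (9 * m : ℤ) := by
      push_cast at heq ⊢
      linear_combination heq
    have h := eq_of_one_div_add_one_div_eq_four_div (by omega) (Int.odd_mul.2 ⟨by decide, hodd⟩)
      (by omega) h23 hd2 hsum
    left
    omega
  · obtain h | h | h | h | h | h :=
      solutions_of_smallest_eq_five hm0 hodd h12 h23 hd1 hd2 (by simpa using heq) <;>
    · cases h
      simp
  · cases solution_of_smallest_eq_seven hm0 hodd h12 h23 hd1 hd2 (by simpa using heq)
    simp
end

section
/- Let g ≥ 5 be an odd integer not divisible by 3. In the direct product group C₃ × D_g, where C₃ is the cyclic group of order 3 and D_g is the dihedral group of order 2g, there exist elements x and y such that x has order 2, y has order 6, the product x·y has order 3g, and x and y generate the whole group. (Explicitly, one may take x = (1, s) and y = (t, s·r) where t generates C₃, r is a rotation of order g, and s is a reflection.) -/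
/-!
Let `t` generate a cyclic group `C` of order coprime to `g`, and take `x = (1, s)` and
`y = (t, s r)`, so that `x * y = (t, r)`. The orders of `t` and `r` being coprime, `(t, 1)` is a
power of `x * y`. Hence `x` and `y` generate `C × 1` together with `1 × ⟨s, s r⟩ = 1 × D_g`.
-/

section Prod

variable {G H : Type*} [Group G] [Group H]

theorem mk_one_mem_zpowers_of_coprime {a : G} {b : H}
    (hab : (orderOf a).Coprime (orderOf b)) : (a, (1 : H)) ∈ Subgroup.zpowers (a, b) := by
  obtain ⟨m, hm⟩ := exists_pow_eq_self_of_coprime hab.symm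
  have pow_eq : ((a, b) ^ orderOf b) ^ m = (a, (1 : H)) := by
    simp only [Prod.pow_mk, pow_orderOf_eq_one, one_pow, hm]
  exact pow_eq ▸ pow_mem (Subgroup.npow_mem_zpowers _ _) m

theorem closure_mk_one_mk_eq_prod_of_coprime {a : G} {u v : H}
    (hauv : (orderOf a).Coprime (orderOf (u * v))) :
    Subgroup.closure {((1 : G), u), (a, v)} =
      (Subgroup.zpowers a).prod (Subgroup.closure {u, v}) := by
  set K := Subgroup.closure {((1 : G), u), (a, v)} with hK
  have u_mem : (1, u) ∈ K := Subgroup.subset_closure (by simp)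
  have v_mem : (a, v) ∈ K := Subgroup.subset_closure (by simp)
  have a_mem : (a, 1) ∈ K := by
    have uv_mem : (a, u * v) ∈ K := by simpa using mul_mem u_mem v_mem
    exact Subgroup.zpowers_le.2 uv_mem (mk_one_mem_zpowers_of_coprime hauv)
  have one_v_mem : (1, v) ∈ K := by simpa using mul_mem (inv_mem a_mem) v_mem
  apply le_antisymm
  · simp [hK, Set.pair_subset_iff, Subgroup.mem_prod, Subgroup.mem_closure_of_mem]
  · rw [Subgroup.prod_le_iff, MonoidHom.map_zpowers, MonoidHom.map_closure, Subgroup.zpowers_le,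
      Subgroup.closure_le, Set.image_pair, Set.pair_subset_iff]
    exact ⟨a_mem, u_mem, one_v_mem⟩

end Prod

section Dihedral

open DihedralGroup

theorem closure_sr_sr_add_one_eq_top {n : ℕ} (i : ZMod n) :
    Subgroup.closure {sr i, sr (i + 1)} = ⊤ := by
  set K := Subgroup.closure {sr i, sr (i + 1)}
  have sr_mem : sr i ∈ K := Subgroup.subset_closure (by simp)
  have r_one_mem : r 1 ∈ K := by
    have sr_succ_mem : sr (i + 1) ∈ K := Subgroup.subset_closure (by simp)
    simpa using mul_mem sr_mem sr_succ_mem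
  have r_mem (j : ZMod n) : r j ∈ K := by
    obtain ⟨k, rfl⟩ := ZMod.intCast_surjective j
    exact r_one_zpow (n := n) k ▸ zpow_mem r_one_mem k
  rw [Subgroup.eq_top_iff']
  rintro (j | j)
  · exact r_mem j
  · simpa using mul_mem sr_mem (r_mem (j - i))

-- The value `0` of `Nat.card`, `orderOf` and `lcm` stands for infinity here: the only infinite
-- cases are `ℤ × D_1` and the infinite dihedral group `D_0`.
theorem generating_pair_Z3_Dg_general {C : Type*} [Group C] [IsCyclic C] {g : ℕ}
    (hC : (Nat.card C).Coprime g) :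
    ∃ x y : C × DihedralGroup g,
      orderOf x = 2 ∧ orderOf y = (Nat.card C).lcm 2 ∧ orderOf (x * y) = Nat.card C * g ∧
      Subgroup.closure {x, y} = ⊤ := by
  obtain ⟨t, zpowers_t⟩ := isCyclic_iff_exists_zpowers_eq_top.1 ‹IsCyclic C›
  have orderOf_t : orderOf t = Nat.card C := orderOf_eq_card_of_zpowers_eq_top zpowers_t
  have s_mul_sr : sr 0 * sr 1 = (r 1 : DihedralGroup g) := by rw [sr_mul_sr, sub_zero]
  have closure_s_sr : Subgroup.closure {sr 0, sr 1} = (⊤ : Subgroup (DihedralGroup g)) := by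
    simpa only [zero_add] using closure_sr_sr_add_one_eq_top (0 : ZMod g)
  refine ⟨(1, sr 0), (t, sr 1), ?_, ?_, ?_, ?_⟩
  · rw [Prod.orderOf_mk, orderOf_one, orderOf_sr, Nat.lcm_one_left]
  · rw [Prod.orderOf_mk, orderOf_t, orderOf_sr]
  · rw [Prod.mk_mul_mk, one_mul, s_mul_sr, Prod.orderOf_mk, orderOf_t, orderOf_r_one,
      hC.lcm_eq_mul]
  · have coprime_orders : (orderOf t).Coprime (orderOf (sr 0 * sr 1 : DihedralGroup g)) := by
      rwa [s_mul_sr, orderOf_t, orderOf_r_one]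
    rw [closure_mk_one_mk_eq_prod_of_coprime coprime_orders, zpowers_t, closure_s_sr,
      Subgroup.top_prod_top]

end Dihedral

/-- For `g ≥ 5` odd not divisible by 3, the group `C₃ × D_g` has a generating pair
`x, y` with `x` of order 2, `y` of order 6 and `x * y` of order `3g`. -/
theorem generating_pair_Z3_Dg (g : ℕ) (hg : 5 ≤ g) (hodd : Odd g) (h3 : ¬ (3 ∣ g)) :
    ∃ x y : Multiplicative (ZMod 3) × DihedralGroup g,
      orderOf x = 2 ∧ orderOf y = 6 ∧ orderOf (x * y) = 3 * g ∧
      Subgroup.closure {x, y} = ⊤ := by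
  have card_C₃ : Nat.card (Multiplicative (ZMod 3)) = 3 := by simp
  have coprime_card : (Nat.card (Multiplicative (ZMod 3))).Coprime g := by
    rwa [card_C₃, Nat.prime_three.coprime_iff_not_dvd]
  have lcm_eq_six : Nat.lcm 3 2 = 6 := rfl
  simpa only [card_C₃, lcm_eq_six] using generating_pair_Z3_Dg_general coprime_card
end

section
/- Let p ≥ 7 be a prime. In the dihedral group D_{3p} of order 6p, generated by a rotation a of order 3p and a reflection b of order 2 with b·a·b = a⁻¹, there exist elements x₁, x₂, x₃, x₄ of respective orders 2, 2, 3, 3p such that x₁·x₂·x₃·x₄ = 1 and x₁, x₂, x₃, x₄ generate D_{3p}. (Explicitly, one may take x₁ = b, x₂ = b·a^{2p−1}, x₃ = aᵖ, x₄ = a.) -/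
/-!
The product of two reflections is a rotation, and every rotation is such a product with the first
reflection prescribed. So rotations `x₃, x₄` and a reflection `x₁` always extend to a vector with
`x₁ x₂ x₃ x₄ = 1` by a reflection `x₂`, which has order 2 automatically, and the vector generates as
soon as `x₄` generates the rotations. In `D_{mp}` one takes `x₁ = b`, `x₃ = aᵖ` and `x₄ = a`, so
that `x₂ = b a^{-(p + 1)}`; for `m = 3` this is `b a^{2p - 1}`.
-/

section

open DihedralGroup

variable {n : ℕ}

theorem closure_r_one_sr (i : ZMod n) :
    Subgroup.closure {(r 1 : DihedralGroup n), sr i} = ⊤ := by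
  set H := Subgroup.closure {(r 1 : DihedralGroup n), sr i}
  have r_mem (j : ZMod n) : r j ∈ H := by
    obtain ⟨k, rfl⟩ := ZMod.intCast_surjective j
    rw [← r_one_zpow]
    exact H.zpow_mem (Subgroup.subset_closure (by simp)) k
  have sr_mem (j : ZMod n) : sr j ∈ H := by
    rw [← add_sub_cancel i j, ← sr_mul_r]
    exact H.mul_mem (Subgroup.subset_closure (by simp)) (r_mem (j - i))
  exact (Subgroup.eq_top_iff' H).2 fun
    | r j => r_mem j
    | sr j => sr_mem j

theorem orderOf_r_natCast_of_dvd {k : ℕ} (hk : k ≠ 0) (hkn : k ∣ n) :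
    orderOf (r k : DihedralGroup n) = n / k := by
  rw [← r_one_pow, orderOf_pow_of_dvd hk (by rwa [orderOf_r_one]), orderOf_r_one]

theorem sr_mul_sr_sub_mul_r_mul_r (i j k : ZMod n) :
    sr i * sr (i - (j + k)) * r j * r k = 1 := by
  rw [mul_assoc, r_mul_r, sr_mul_sr, r_mul_r, sub_sub_cancel_left, neg_add_cancel, r_zero]

theorem generating_vector_D3p_general (m p : ℕ) (hp : p ≠ 0) :
    ∃ x₁ x₂ x₃ x₄ : DihedralGroup (m * p),
      orderOf x₁ = 2 ∧ orderOf x₂ = 2 ∧ orderOf x₃ = m ∧ orderOf x₄ = m * p ∧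
      x₁ * x₂ * x₃ * x₄ = 1 ∧ Subgroup.closure {x₁, x₂, x₃, x₄} = ⊤ := by
  have orderOf_r_p : orderOf (r p : DihedralGroup (m * p)) = m := by
    rw [orderOf_r_natCast_of_dvd hp (dvd_mul_left p m), mul_div_cancel_right₀ m hp]
  refine ⟨sr 0, sr (0 - (p + 1)), r p, r 1, orderOf_sr _, orderOf_sr _, orderOf_r_p,
    orderOf_r_one, sr_mul_sr_sub_mul_r_mul_r _ _ _, top_unique ?_⟩
  rw [← closure_r_one_sr 0]
  exact Subgroup.closure_mono (by simp [Set.insert_subset_iff])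

end

/-- For `p ≥ 7` prime, the dihedral group `D_{3p}` of order `6p` has a generating
vector of signature `(0; 2, 2, 3, 3p)`. -/
theorem generating_vector_D3p (p : ℕ) (hp : p.Prime) (hp7 : 7 ≤ p) :
    ∃ x₁ x₂ x₃ x₄ : DihedralGroup (3 * p),
      orderOf x₁ = 2 ∧ orderOf x₂ = 2 ∧ orderOf x₃ = 3 ∧ orderOf x₄ = 3 * p ∧
      x₁ * x₂ * x₃ * x₄ = 1 ∧ Subgroup.closure {x₁, x₂, x₃, x₄} = ⊤ :=
  generating_vector_D3p_general 3 p hp.ne_zero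
end

section
/- Let p ≥ 7 be a prime. In the direct product group D_p × C₃, where D_p is the dihedral group of order 2p (generated by a rotation r of order p and a reflection s of order 2) and C₃ = ⟨t⟩ is cyclic of order 3, the elements x₁ = (s,1), x₂ = (s·r,1), x₃ = (1,t), x₄ = (r⁻¹, t⁻¹) have respective orders 2, 2, 3, 3p, satisfy x₁·x₂·x₃·x₄ = 1, and generate the whole group. -/
/-!
Since `x₁ x₂ = (r, 1)`, the relation `x₁ x₂ x₃ x₄ = 1` is immediate. The order of a pair is the lcm
of the orders of its entries, so `x₄` has order `lcm (3, p) = 3p`. The reflections `s` and `s r`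
generate the dihedral group because their product is the basic rotation, and `t` generates the
cyclic factor, so `(s, 1)`, `(s r, 1)` and `(1, t)` generate the direct product.
-/

open DihedralGroup

lemma closure_inl_image_union_inr_image {G N : Type*} [Group G] [Group N] (s : Set G) (t : Set N) :
    Subgroup.closure (MonoidHom.inl G N '' s ∪ MonoidHom.inr G N '' t) =
      (Subgroup.closure s).prod (Subgroup.closure t) := by
  rw [Subgroup.closure_union, ← MonoidHom.map_closure, ← MonoidHom.map_closure]
  exact le_antisymm (sup_le_iff.2 (Subgroup.prod_le_iff.1 le_rfl))
    (Subgroup.prod_le_iff.2 ⟨le_sup_left, le_sup_right⟩)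

lemma zmultiples_one_zmod_eq_top (n : ℕ) : AddSubgroup.zmultiples (1 : ZMod n) = ⊤ := by
  rw [← Int.range_castAddHom, AddMonoidHom.range_eq_top]
  exact ZMod.intCast_surjective

lemma zpowers_ofAdd_one_zmod_eq_top (n : ℕ) :
    Subgroup.zpowers (Multiplicative.ofAdd (1 : ZMod n)) = ⊤ := by
  rw [← SetLike.coe_set_eq, ← ofAdd_image_zmultiples_eq_zpowers_ofAdd, zmultiples_one_zmod_eq_top]
  simp

lemma closure_pair_sr_eq_top {n : ℕ} {i j : ZMod n} (h : AddSubgroup.zmultiples (j - i) = ⊤) :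
    Subgroup.closure {sr i, sr j} = (⊤ : Subgroup (DihedralGroup n)) := by
  set H := Subgroup.closure {sr i, sr j}
  have sr_mem : sr i ∈ H := Subgroup.subset_closure (by simp)
  have r_sub_mem : r (j - i) ∈ H := by
    rw [← sr_mul_sr]
    exact H.mul_mem sr_mem (Subgroup.subset_closure (by simp))
  have r_mem (k : ZMod n) : r k ∈ H := by
    obtain ⟨m, rfl⟩ := AddSubgroup.mem_zmultiples_iff.1 (h ▸ AddSubgroup.mem_top k)
    rw [zsmul_eq_mul, mul_comm, ← r_zpow]
    exact H.zpow_mem r_sub_mem m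
  refine (Subgroup.eq_top_iff' H).2 fun g => ?_
  cases g with
  | r k => exact r_mem k
  | sr k => simpa using H.mul_mem sr_mem (r_mem (k - i))

lemma closure_dihedralGroup_prod_eq_top (n : ℕ) {C : Type*} [Group C] {t : C}
    (ht : Subgroup.zpowers t = ⊤) :
    Subgroup.closure {(sr 0, 1), (sr 1, 1), (1, t)} = (⊤ : Subgroup (DihedralGroup n × C)) := by
  have reflections : Subgroup.closure {sr 0, sr 1} = (⊤ : Subgroup (DihedralGroup n)) :=
    closure_pair_sr_eq_top (by rw [sub_zero, zmultiples_one_zmod_eq_top])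
  have h := closure_inl_image_union_inr_image ({sr 0, sr 1} : Set (DihedralGroup n)) {t}
  rw [reflections, ← Subgroup.zpowers_eq_closure, ht, Subgroup.top_prod_top] at h
  simpa [-Set.union_singleton, Set.image_pair, Set.insert_union] using h

/-- At `n = 0` and `m = 0` the corresponding factor is infinite dihedral and infinite cyclic; there
the order `0` of `x₃` or `x₄` stands for infinite order. -/
theorem generating_vector_Dp_Z3_general (n m : ℕ) :
    let x₁ : DihedralGroup n × Multiplicative (ZMod m) := (sr 0, 1)
    let x₂ : DihedralGroup n × Multiplicative (ZMod m) := (sr 0 * r 1, 1)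
    let x₃ : DihedralGroup n × Multiplicative (ZMod m) := (1, Multiplicative.ofAdd (1 : ZMod m))
    let x₄ : DihedralGroup n × Multiplicative (ZMod m) :=
      ((r 1)⁻¹, (Multiplicative.ofAdd (1 : ZMod m))⁻¹)
    orderOf x₁ = 2 ∧ orderOf x₂ = 2 ∧ orderOf x₃ = m ∧ orderOf x₄ = m.lcm n ∧
      x₁ * x₂ * x₃ * x₄ = 1 ∧ Subgroup.closure {x₁, x₂, x₃, x₄} = ⊤ := by
  intro x₁ x₂ x₃ x₄
  have hx₂ : x₂ = (sr 1, 1) := by simp [x₂]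
  refine ⟨?_, ?_, ?_, ?_, ?_, ?_⟩
  · simp [x₁, Prod.orderOf_mk]
  · simp [hx₂, Prod.orderOf_mk]
  · simp [x₃, Prod.orderOf_mk]
  · rw [Prod.orderOf_mk, orderOf_inv, orderOf_inv, orderOf_r_one, orderOf_ofAdd_eq_addOrderOf,
      ZMod.addOrderOf_one, Nat.lcm_comm]
  · simp [x₁, hx₂, x₃, x₄]
  · rw [eq_top_iff, ← closure_dihedralGroup_prod_eq_top n (zpowers_ofAdd_one_zmod_eq_top m), hx₂]
    exact Subgroup.closure_mono (by simp [Set.insert_subset_iff, x₁, x₃])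

/-- For `p ≥ 7` prime, the explicit elements `x₁ = (s, 1)`, `x₂ = (s·r, 1)`,
`x₃ = (1, t)`, `x₄ = (r⁻¹, t⁻¹)` of `D_p × C₃` have orders `2, 2, 3, 3p`, have
product 1, and generate the whole group. -/
theorem generating_vector_Dp_Z3 (p : ℕ) (hp : p.Prime) (hp7 : 7 ≤ p) :
    let x₁ : DihedralGroup p × Multiplicative (ZMod 3) := (DihedralGroup.sr 0, 1)
    let x₂ : DihedralGroup p × Multiplicative (ZMod 3) :=
      (DihedralGroup.sr 0 * DihedralGroup.r 1, 1)
    let x₃ : DihedralGroup p × Multiplicative (ZMod 3) :=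
      (1, Multiplicative.ofAdd (1 : ZMod 3))
    let x₄ : DihedralGroup p × Multiplicative (ZMod 3) :=
      ((DihedralGroup.r 1)⁻¹, (Multiplicative.ofAdd (1 : ZMod 3))⁻¹)
    orderOf x₁ = 2 ∧ orderOf x₂ = 2 ∧ orderOf x₃ = 3 ∧ orderOf x₄ = 3 * p ∧
      x₁ * x₂ * x₃ * x₄ = 1 ∧ Subgroup.closure {x₁, x₂, x₃, x₄} = ⊤ := by
  have coprime : Nat.Coprime 3 p := (Nat.coprime_primes Nat.prime_three hp).2 (by lia)
  simpa only [coprime.lcm_eq_mul] using generating_vector_Dp_Z3_general p 3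
end

section
/- Let p ≥ 7 be a prime. In the direct product group D_p × C₆, where D_p is the dihedral group of order 2p and C₆ is the cyclic group of order 6, there exist elements x and y such that x has order 2, y has order 6, the product x·y has order 6p, and x and y generate the whole group. (Explicitly, with r a rotation of order p, s a reflection, and T a generator of C₆, one may take x = (s, T³) and y = (s·r⁻¹, T²).) -/
/-! For a generator `t` of a cyclic group of order `2m`, take `x = (s, tᵐ)` and `y = (s r, t²)`, so
that `x * y = (r, tᵐ⁺²)`; as `m` is odd, `tᵐ⁺²` is again a generator. The orders of `r` and
`tᵐ⁺²` being coprime, the powers of `x * y` include the whole cyclic factor. Dividing it out leaves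
the reflections `s` and `s r`, which generate the dihedral factor. -/

open Subgroup DihedralGroup

section Prod

variable {G K : Type*} [Group G] [Group K]

theorem map_fst_prod_top_eq_of_mem {H : Subgroup (G × K)} {g : G} {k : K} (hmem : (g, k) ∈ H)
    (hcop : (orderOf g).Coprime (orderOf k)) (hk : zpowers k = ⊤) :
    (H.map (MonoidHom.fst G K)).prod ⊤ = H := by
  have one_k_mem : ((1, k) : G × K) ∈ H := by
    obtain ⟨j, hj⟩ := exists_pow_eq_self_of_coprime hcop
    simpa [pow_orderOf_eq_one, hj] using H.pow_mem (H.pow_mem hmem (orderOf g)) j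
  have one_mem (c : K) : ((1, c) : G × K) ∈ H := by
    obtain ⟨i, rfl⟩ := mem_zpowers_iff.1 (hk ▸ mem_top c)
    simpa using H.zpow_mem one_k_mem i
  apply le_antisymm
  · rintro ⟨_, c⟩ ⟨⟨⟨a, b⟩, hab, rfl⟩, -⟩
    simpa using H.mul_mem hab (one_mem (b⁻¹ * c))
  · exact fun z hz ↦ ⟨mem_map_of_mem _ hz, mem_top _⟩

theorem closure_pair_prod_eq_top {a b : G} {c d : K} (hab : closure {a, b} = ⊤)
    (hcop : (orderOf (a * b)).Coprime (orderOf (c * d))) (hcd : zpowers (c * d) = ⊤) :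
    closure {(a, c), (b, d)} = ⊤ := by
  have mul_mem_closure : (a, c) * (b, d) ∈ closure {(a, c), (b, d)} :=
    mul_mem (mem_closure_of_mem (by simp)) (mem_closure_of_mem (by simp))
  rw [← map_fst_prod_top_eq_of_mem mul_mem_closure hcop hcd, MonoidHom.map_closure, Set.image_pair]
  simp only [MonoidHom.coe_fst, hab, top_prod_top]

end Prod

theorem zpowers_pow_eq_top {K : Type*} [Group K] {t : K} {k : ℕ} (ht : zpowers t = ⊤)
    (hk : (orderOf t).Coprime k) : zpowers (t ^ k) = ⊤ := by
  rw [eq_top_iff, ← ht, zpowers_le, mem_zpowers_pow_iff]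
  exact hk.symm

theorem closure_pair_sr_sr_add_one {n : ℕ} (i : ZMod n) : closure {sr i, sr (i + 1)} = ⊤ := by
  set H := closure {sr i, sr (i + 1)}
  have sr_mem : sr i ∈ H := mem_closure_of_mem (by simp)
  have r_one_mem : r 1 ∈ H := by
    simpa using H.mul_mem sr_mem (mem_closure_of_mem (by simp : sr (i + 1) ∈ _))
  have r_mem (j : ZMod n) : r j ∈ H := by
    obtain ⟨k, rfl⟩ := ZMod.intCast_surjective j
    simpa using H.zpow_mem r_one_mem k
  rw [eq_top_iff']
  rintro (j | j)
  · exact r_mem j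
  · simpa using H.mul_mem sr_mem (r_mem (j - i))

theorem coprime_two_mul_add_two_of_odd {m : ℕ} (hm : Odd m) : (2 * m).Coprime (m + 2) := by
  simp [Nat.coprime_mul_iff_left, Nat.coprime_two_left, hm]

theorem generating_pair_Dp_Z6_general {n m : ℕ} {K : Type*} [Group K] [IsCyclic K]
    (hm : Odd m) (hK : Nat.card K = 2 * m) (hn : n.Coprime (2 * m)) :
    ∃ x y : DihedralGroup n × K,
      orderOf x = 2 ∧ orderOf y = 2 * m ∧ orderOf (x * y) = 2 * m * n ∧ closure {x, y} = ⊤ := by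
  obtain ⟨t, zpowers_t⟩ := isCyclic_iff_exists_zpowers_eq_top.mp ‹IsCyclic K›
  have orderOf_t : orderOf t = 2 * m := (orderOf_eq_card_of_zpowers_eq_top zpowers_t).trans hK
  have orderOf_t_pow : orderOf (t ^ m) = 2 := by
    rw [orderOf_pow_of_dvd hm.pos.ne' (by simp [orderOf_t]), orderOf_t,
      Nat.mul_div_cancel _ hm.pos]
  have orderOf_t_sq : orderOf (t ^ 2) = m := by
    rw [orderOf_pow_of_dvd two_ne_zero (by simp [orderOf_t]), orderOf_t,
      Nat.mul_div_cancel_left _ two_pos]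
  have coprime_t : (orderOf t).Coprime (m + 2) := orderOf_t ▸ coprime_two_mul_add_two_of_odd hm
  have orderOf_mul : orderOf (t ^ m * t ^ 2) = 2 * m := by
    rw [← pow_add, coprime_t.orderOf_pow, orderOf_t]
  have sr_mul_sr_one : sr 0 * sr 1 = (r 1 : DihedralGroup n) := by simp
  refine ⟨(sr 0, t ^ m), (sr 1, t ^ 2), ?_, ?_, ?_, closure_pair_prod_eq_top ?_ ?_ ?_⟩
  · rw [Prod.orderOf_mk, orderOf_sr, orderOf_t_pow, Nat.lcm_self]
  · rw [Prod.orderOf_mk, orderOf_sr, orderOf_t_sq, hm.coprime_two_left.lcm_eq_mul]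
  · rw [Prod.mk_mul_mk, sr_mul_sr_one, Prod.orderOf_mk, orderOf_r_one, orderOf_mul,
      hn.lcm_eq_mul, mul_comm]
  · simpa using closure_pair_sr_sr_add_one (0 : ZMod n)
  · rwa [sr_mul_sr_one, orderOf_r_one, orderOf_mul]
  · simpa only [pow_add] using zpowers_pow_eq_top zpowers_t coprime_t

/-- For `p ≥ 7` prime, the group `D_p × C₆` has a generating pair `x, y` with `x`
of order 2, `y` of order 6 and `x * y` of order `6p`. -/
theorem generating_pair_Dp_Z6 (p : ℕ) (hp : p.Prime) (hp7 : 7 ≤ p) :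
    ∃ x y : DihedralGroup p × Multiplicative (ZMod 6),
      orderOf x = 2 ∧ orderOf y = 6 ∧ orderOf (x * y) = 6 * p ∧
      Subgroup.closure {x, y} = ⊤ := by
  have hcop : p.Coprime 6 := Nat.coprime_of_lt_prime (by norm_num) (by lia) hp
  exact generating_pair_Dp_Z6_general (m := 3) (by decide) (by simp) hcop
end

section
/- There exists a finite group G of order 63 that is not cyclic, together with elements x, y ∈ G such that x has order 7, y has order 9, the product x·y has order 9, and x and y generate G. (One such group is the semidirect product ⟨a, b : a⁷ = b⁹ = 1, b·a·b⁻¹ = a⁴⟩ with x = a and y = b.) -/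
/-!
Let `u` be a unit modulo `n` with `u ^ m = 1` and `u - 1` invertible, and let a generator `y` of
`C_m` act on `C_n` as multiplication by `u`. This automorphism has no nontrivial fixed point, so
every element of `C_n` has the form `c / y(c)`. As `(c / y(c)) * y = c * y * c⁻¹` in `C_n ⋊ C_m`,
every `x * y` with `x ∈ C_n` is conjugate to `y` and has order `m`. The genus 21 example is
`n = 7`, `m = 9`, `u = 4`.
-/

open MonoidHom Multiplicative SemidirectProduct

section SemidirectProduct

variable {N G : Type*} [Group N] [Group G] {φ : G →* MulAut N}

theorem closure_image_inl_union_image_inr_eq_top {S : Set N} {T : Set G}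
    (hS : Subgroup.closure S = ⊤) (hT : Subgroup.closure T = ⊤) :
    Subgroup.closure (inl '' S ∪ inr '' T : Set (N ⋊[φ] G)) = ⊤ := by
  rw [Subgroup.closure_union, ← map_closure, ← map_closure, hS, hT, Subgroup.eq_top_iff']
  intro z
  rw [← inl_left_mul_inr_right z]
  exact Subgroup.mul_mem_sup (Subgroup.mem_map_of_mem _ (Subgroup.mem_top _))
    (Subgroup.mem_map_of_mem _ (Subgroup.mem_top _))

theorem eq_one_of_isMulCommutative_semidirectProduct [IsMulCommutative (N ⋊[φ] G)] : φ = 1 := by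
  ext g n
  apply inl_injective (φ := φ)
  rw [inl_aut, mul_comm' (inr g) (inl n), map_inv, mul_inv_cancel_right, one_apply,
    MulAut.one_apply]

theorem not_isCyclic_semidirectProduct_of_fixedPointFree [Nontrivial N] {g : G}
    (hg : FixedPointFree (φ g)) : ¬ IsCyclic (N ⋊[φ] G) := by
  intro h_cyclic
  obtain ⟨n, hn⟩ := exists_ne (1 : N)
  have h_trivial : φ = 1 := eq_one_of_isMulCommutative_semidirectProduct
  exact hn (hg n (by rw [h_trivial, one_apply, MulAut.one_apply]))

theorem semiconjBy_inl_inr (c : N) (g : G) :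
    SemiconjBy (inl c : N ⋊[φ] G) (inr g) (inl (c / φ g c) * inr g) := by
  rw [SemiconjBy, map_div, inl_aut, map_inv, div_eq_mul_inv]
  group

theorem orderOf_inl_mul_inr_of_fixedPointFree [Finite N] {g : G} (hg : FixedPointFree (φ g))
    (n : N) : orderOf (inl n * inr g : N ⋊[φ] G) = orderOf g := by
  obtain ⟨c, rfl⟩ := hg.commutatorMap_surjective n
  rw [commutatorMap_apply, ← (semiconjBy_inl_inr c g).orderOf_eq,
    orderOf_injective inr inr_injective]

end SemidirectProduct

section UnitsAction

variable {R : Type*} [Ring R]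

/-- The action of the units of a ring on its additive group by left multiplication. The additive
group is written multiplicatively, as the normal factor of a `SemidirectProduct` must be. -/
def unitsMulAut : Rˣ →* MulAut (Multiplicative R) :=
  (MulAutMultiplicative R).symm.toMonoidHom.comp AddAut.mulLeft

theorem unitsMulAut_ofAdd (u : Rˣ) (r : R) : unitsMulAut u (ofAdd r) = ofAdd (u * r) := rfl

theorem fixedPointFree_unitsMulAut {u : Rˣ} (hu : IsLeftRegular (u - 1 : R)) :
    FixedPointFree (unitsMulAut u) := by
  refine Multiplicative.rec fun r hr ↦ ?_
  have h_fixed : (u : R) * r = r := ofAdd.injective (unitsMulAut_ofAdd u r ▸ hr)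
  have h_zero : r = 0 := hu (by simp only [sub_mul, h_fixed, one_mul, sub_self, mul_zero])
  rw [h_zero, ofAdd_zero]

end UnitsAction

theorem orderOf_ofAdd_one_zmod (n : ℕ) : orderOf (ofAdd (1 : ZMod n)) = n := by
  rw [orderOf_ofAdd_eq_addOrderOf, ZMod.addOrderOf_one]

theorem mem_zpowers_ofAdd_one_zmod {n : ℕ} (a : Multiplicative (ZMod n)) :
    a ∈ Subgroup.zpowers (ofAdd (1 : ZMod n)) := by
  obtain ⟨k, hk⟩ := ZMod.intCast_surjective a.toAdd
  exact ⟨k, toAdd.injective (by simp [hk])⟩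

theorem closure_ofAdd_one_zmod_eq_top (n : ℕ) : Subgroup.closure {ofAdd (1 : ZMod n)} = ⊤ := by
  rw [← Subgroup.zpowers_eq_closure, Subgroup.eq_top_iff']
  exact mem_zpowers_ofAdd_one_zmod

theorem exists_monoidHom_zmod_apply_ofAdd_one {A : Type*} [Group A] {m : ℕ} {a : A}
    (ha : a ^ m = 1) : ∃ f : Multiplicative (ZMod m) →* A, f (ofAdd 1) = a :=
  have h_dvd : orderOf a ∣ orderOf (ofAdd (1 : ZMod m)) :=
    (orderOf_ofAdd_one_zmod m).symm ▸ orderOf_dvd_of_pow_eq_one ha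
  ⟨monoidHomOfForallMemZpowers mem_zpowers_ofAdd_one_zmod h_dvd,
    monoidHomOfForallMemZpowers_apply_gen mem_zpowers_ofAdd_one_zmod h_dvd⟩

theorem exceptional_genus_21_general {n m : ℕ} (hn : 1 < n) (hm : m ≠ 0) (u : (ZMod n)ˣ)
    (hu : IsUnit (u - 1 : ZMod n)) (hum : u ^ m = 1) :
    ∃ (G : Type) (_ : Group G) (_ : Finite G),
      Nat.card G = n * m ∧ ¬ IsCyclic G ∧
      ∃ x y : G, orderOf x = n ∧ orderOf y = m ∧ orderOf (x * y) = m ∧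
        Subgroup.closure {x, y} = ⊤ := by
  have : Fact (1 < n) := ⟨hn⟩
  have : NeZero n := ⟨by lia⟩
  obtain ⟨χ, hχ⟩ := exists_monoidHom_zmod_apply_ofAdd_one hum
  let φ := unitsMulAut.comp χ
  have h_free : FixedPointFree (φ (ofAdd 1)) := by
    rw [comp_apply, hχ]
    exact fixedPointFree_unitsMulAut hu.isRegular.left
  have h_card : Nat.card (Multiplicative (ZMod n) ⋊[φ] Multiplicative (ZMod m)) = n * m := by
    rw [SemidirectProduct.card, Nat.card_congr toAdd, Nat.card_congr toAdd, Nat.card_zmod,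
      Nat.card_zmod]
  refine ⟨Multiplicative (ZMod n) ⋊[φ] Multiplicative (ZMod m), inferInstance,
    Nat.finite_of_card_ne_zero (h_card ▸ mul_ne_zero (NeZero.ne n) hm), h_card,
    not_isCyclic_semidirectProduct_of_fixedPointFree h_free,
    inl (ofAdd 1), inr (ofAdd 1), ?_, ?_, ?_, ?_⟩
  · rw [orderOf_injective inl inl_injective, orderOf_ofAdd_one_zmod]
  · rw [orderOf_injective inr inr_injective, orderOf_ofAdd_one_zmod]
  · rw [orderOf_inl_mul_inr_of_fixedPointFree h_free, orderOf_ofAdd_one_zmod]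
  · simpa only [Set.image_singleton, Set.singleton_union] using
      closure_image_inl_union_image_inr_eq_top (closure_ofAdd_one_zmod_eq_top n)
        (closure_ofAdd_one_zmod_eq_top m)

/-- There is a non-cyclic group of order 63 generated by an element of order 7 and
an element of order 9 whose product has order 9. -/
theorem exceptional_genus_21 :
    ∃ (G : Type) (_ : Group G) (_ : Finite G),
      Nat.card G = 63 ∧ ¬ IsCyclic G ∧
      ∃ x y : G, orderOf x = 7 ∧ orderOf y = 9 ∧ orderOf (x * y) = 9 ∧
        Subgroup.closure {x, y} = ⊤ :=
  exceptional_genus_21_general (n := 7) (m := 9) (by norm_num) (by norm_num)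
    (ZMod.unitOfCoprime 4 (by norm_num)) (by decide) (by decide)
end

section
/- Let m ≥ 5 be an odd integer not divisible by 3, let ζ ∈ ℂ be a primitive m-th root of unity, and let ω ∈ ℂ be a primitive cube root of unity. Then the field extension ℚ(ζ + ζ⁻¹, ω) of ℚ has degree φ(m), where φ is Euler's totient function. -/
/-!
Complex conjugation fixes `F = ℚ(ζ + ζ⁻¹)` pointwise and moves both `ζ` and `ω`. Each of these is a
root of a quadratic over `F`, namely `X² - (ζ + ζ⁻¹) X + 1` and `X² + X + 1`, so each has degree
exactly two over `F`. Hence `[F(ω) : ℚ] = 2 [F : ℚ] = [F(ζ) : ℚ] = [ℚ(ζ) : ℚ] = φ(m)`.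
-/

open IntermediateField Module Polynomial ComplexConjugate

section AdjoinQuadratic

variable {K L : Type*} [Field K] [Field L] [Algebra K L]

lemma finrank_adjoin_simple_eq_two {x : L} {p : K[X]} (hp : p.natDegree = 2)
    (hpx : aeval x p = 0) (hx : x ∉ (algebraMap K L).range) : finrank K K⟮x⟯ = 2 := by
  have hp0 : p ≠ 0 := ne_zero_of_natDegree_gt (hp ▸ two_pos)
  have hint : IsIntegral K x := IsAlgebraic.isIntegral ⟨p, hp0, hpx⟩
  rw [adjoin.finrank hint]
  exact le_antisymm (hp ▸ natDegree_le_of_dvd (minpoly.dvd K x hpx) hp0)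
    ((minpoly.two_le_natDegree_iff hint).2 hx)

lemma notMem_adjoin_simple_of_map_ne {σ : L ≃ₐ[K] L} {s x : L} (hs : σ s = s) (hx : σ x ≠ x) :
    x ∉ K⟮s⟯ := fun hmem ↦
  hx ((forall_mem_adjoin_smul_eq_self_iff K σ).2 (by simpa using hs) x hmem)

lemma finrank_adjoin_pair_of_quadratic {σ : L ≃ₐ[K] L} {s x : L} (hs : σ s = s) (hx : σ x ≠ x)
    {p : K⟮s⟯[X]} (hp : p.natDegree = 2) (hpx : aeval x p = 0) :
    finrank K K⟮s, x⟯ = finrank K K⟮s⟯ * 2 := by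
  have hrange : x ∉ (algebraMap K⟮s⟯ L).range := by
    rintro ⟨y, rfl⟩
    exact notMem_adjoin_simple_of_map_ne hs hx y.2
  rw [← adjoin_simple_adjoin_simple, ← finrank_adjoin_simple_eq_two hp hpx hrange]
  exact (finrank_mul_finrank K K⟮s⟯ K⟮s⟯⟮x⟯).symm

lemma finrank_adjoin_pair_of_natDegree_minpoly_eq_two {σ : L ≃ₐ[K] L} {s x : L} (hs : σ s = s)
    (hx : σ x ≠ x) (hdeg : (minpoly K x).natDegree = 2) :
    finrank K K⟮s, x⟯ = finrank K K⟮s⟯ * 2 := by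
  refine finrank_adjoin_pair_of_quadratic hs hx
    (p := (minpoly K x).map (algebraMap K K⟮s⟯)) ?_ ?_
  · rw [natDegree_map, hdeg]
  · rw [aeval_map_algebraMap, minpoly.aeval]

lemma map_add_inv_eq_self {σ : L ≃ₐ[K] L} {x : L} (hσ : σ x = x⁻¹) :
    σ (x + x⁻¹) = x + x⁻¹ := by
  rw [map_add, map_inv₀, hσ, inv_inv, add_comm]

lemma adjoin_add_inv_pair (x : L) : K⟮x + x⁻¹, x⟯ = K⟮x⟯ := by
  have hx : x ∈ K⟮x⟯ := mem_adjoin_simple_self K x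
  apply le_antisymm
  · rw [adjoin_le_iff, Set.pair_subset_iff]
    exact ⟨add_mem hx (inv_mem hx), hx⟩
  · exact adjoin_simple_le_iff.2 (mem_adjoin_pair_right K _ x)

lemma finrank_adjoin_eq_finrank_adjoin_add_inv_mul_two {σ : L ≃ₐ[K] L} {x : L}
    (hσ : σ x = x⁻¹) (hx : x⁻¹ ≠ x) : finrank K K⟮x⟯ = finrank K K⟮x + x⁻¹⟯ * 2 := by
  have hx0 : x ≠ 0 := by
    rintro rfl
    exact hx inv_zero
  let p : K⟮x + x⁻¹⟯[X] := X ^ 2 - C (AdjoinSimple.gen K (x + x⁻¹)) * X + 1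
  have hp : p.natDegree = 2 := by
    simp only [p]
    compute_degree!
  have hpx : aeval x p = 0 := by
    simp only [p, map_add, map_sub, map_mul, map_pow, map_one, aeval_X, aeval_C,
      AdjoinSimple.algebraMap_gen]
    field_simp
    ring
  rw [← finrank_adjoin_pair_of_quadratic (map_add_inv_eq_self hσ) (hσ ▸ hx) hp hpx,
    adjoin_add_inv_pair]

end AdjoinQuadratic

lemma inv_ne_self_of_isPrimitiveRoot {G : Type*} [CommGroupWithZero G] {x : G} {n : ℕ}
    (hx : IsPrimitiveRoot x n) (hn : 2 < n) : x⁻¹ ≠ x := by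
  intro h
  have hsq : x ^ 2 = 1 := by
    nth_rw 1 [sq, ← h]
    exact inv_mul_cancel₀ (hx.ne_zero (by omega))
  exact hn.not_ge (Nat.le_of_dvd two_pos (hx.dvd_of_pow_eq_one 2 hsq))

lemma conj_eq_inv_of_isPrimitiveRoot {z : ℂ} {n : ℕ} (hz : IsPrimitiveRoot z n) (hn : n ≠ 0) :
    conj z = z⁻¹ :=
  (Complex.inv_eq_conj (hz.norm'_eq_one hn)).symm

lemma conj_ne_self_of_isPrimitiveRoot {z : ℂ} {n : ℕ} (hz : IsPrimitiveRoot z n) (hn : 2 < n) :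
    conj z ≠ z := by
  rw [conj_eq_inv_of_isPrimitiveRoot hz (by omega)]
  exact inv_ne_self_of_isPrimitiveRoot hz hn

lemma natDegree_minpoly_rat_of_isPrimitiveRoot {L : Type*} [Field L] [CharZero L] {x : L} {n : ℕ}
    (hx : IsPrimitiveRoot x n) (hn : 0 < n) : (minpoly ℚ x).natDegree = n.totient := by
  rw [← cyclotomic_eq_minpoly_rat hx hn, natDegree_cyclotomic]

theorem character_field_degree_general {m : ℕ} (hm : 2 < m) {ζ z : ℂ} (hζ : IsPrimitiveRoot ζ m)
    (hz : conj z ≠ z) (hdeg : (minpoly ℚ z).natDegree = 2) :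
    finrank ℚ ℚ⟮ζ + ζ⁻¹, z⟯ = m.totient := by
  have hm0 : 0 < m := by omega
  let σ : ℂ ≃ₐ[ℚ] ℂ := Complex.conjAe.restrictScalars ℚ
  have hσζ : σ ζ = ζ⁻¹ := conj_eq_inv_of_isPrimitiveRoot hζ hm0.ne'
  calc finrank ℚ ℚ⟮ζ + ζ⁻¹, z⟯
    _ = finrank ℚ ℚ⟮ζ + ζ⁻¹⟯ * 2 :=
        finrank_adjoin_pair_of_natDegree_minpoly_eq_two (σ := σ) (map_add_inv_eq_self hσζ) hz hdeg
    _ = finrank ℚ ℚ⟮ζ⟯ := (finrank_adjoin_eq_finrank_adjoin_add_inv_mul_two hσζ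
        (inv_ne_self_of_isPrimitiveRoot hζ hm)).symm
    _ = (minpoly ℚ ζ).natDegree := adjoin.finrank (hζ.isIntegral hm0).tower_top
    _ = m.totient := natDegree_minpoly_rat_of_isPrimitiveRoot hζ hm0

/-- For `m ≥ 5` odd not divisible by 3, `ζ` a primitive `m`-th root of unity and
`ω` a primitive cube root of unity in `ℂ`, the field `ℚ(ζ + ζ⁻¹, ω)` has degree
`φ(m)` over `ℚ`. -/
theorem character_field_degree (m : ℕ) (hm : 5 ≤ m) (hodd : Odd m) (h3 : ¬ (3 ∣ m))
    (ζ ω : ℂ) (hζ : IsPrimitiveRoot ζ m) (hω : IsPrimitiveRoot ω 3) :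
    Module.finrank ℚ (IntermediateField.adjoin ℚ {ζ + ζ⁻¹, ω} : IntermediateField ℚ ℂ)
      = Nat.totient m :=
  character_field_degree_general (by omega) hζ
    (conj_ne_self_of_isPrimitiveRoot hω (Nat.lt_succ_self 2))
    (natDegree_minpoly_rat_of_isPrimitiveRoot hω three_pos)
end

section
/- Let p ≥ 13 be a prime with p ≡ 3 (mod 4), and let G be a finite non-cyclic group of order 12p that contains a normal cyclic subgroup of order 3p and an element of order 12. Then there exist elements x, y ∈ G such that x has order p, y has order 12, y·x·y⁻¹ = x⁻¹, and x and y generate G; that is, G is isomorphic to the semidirect product ℤ_p ⋊₂ ℤ₁₂ = ⟨x, y : xᵖ = y¹² = 1, y·x·y⁻¹ = x⁻¹⟩. -/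
/-!
Let `N` be a normal cyclic subgroup and `x ∈ N` of prime order `p`. Conjugation by `y` restricts to
an automorphism of the cyclic group `N`, so `y * x * y⁻¹ = x ^ k` for some `k`. Since `N` is
abelian and contains `y ^ N.index`, we get `k ^ N.index = 1` in `ZMod p`. If `N.index` and `p - 1`
have no common divisor beyond `2`, then `k ^ 2 = 1`, so `y` centralizes or inverts `x`. When the
order of `y` is the prime-to-`p` cofactor of `p` in the order of `G`, the elements `x` and `y`
generate `G`, and `y` cannot centralize `x` unless `G` is cyclic, generated by `x * y`.
Here `N` has index `4`, and `p ≡ 3 (mod 4)` gives `gcd (4, p - 1) = 2`.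
-/

lemma eq_one_or_eq_neg_one_of_pow_eq_one {K : Type*} [Field K] [Fintype K] {a : K} {d : ℕ}
    (hd : d ≠ 0) (hgcd : d.gcd (Fintype.card K - 1) ∣ 2) (ha : a ^ d = 1) : a = 1 ∨ a = -1 := by
  have ha0 : a ≠ 0 := (IsUnit.of_pow_eq_one ha hd).ne_zero
  have hdvd : orderOf a ∣ d.gcd (Fintype.card K - 1) :=
    Nat.dvd_gcd (orderOf_dvd_of_pow_eq_one ha)
      (orderOf_dvd_of_pow_eq_one (FiniteField.pow_card_sub_one_eq_one a ha0))
  exact sq_eq_one_iff.1 (orderOf_dvd_iff_pow_eq_one.1 (hdvd.trans hgcd))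

section Group

variable {G : Type*} [Group G] {x y : G}

lemma semiconjBy_pow_zpow_pow {k : ℤ} (h : SemiconjBy y x (x ^ k)) (m : ℕ) :
    SemiconjBy (y ^ m) x (x ^ k ^ m) := by
  induction m with
  | zero => simp
  | succ m ih =>
    rw [pow_succ' y, pow_succ' k, zpow_mul]
    exact (h.zpow_right (k ^ m)).mul_left ih

lemma commute_or_semiconjBy_inv_of_commute_pow {k : ℤ} {d : ℕ} (hx : (orderOf x).Prime)
    (hd : d ≠ 0) (hgcd : d.gcd (orderOf x - 1) ∣ 2) (hk : SemiconjBy y x (x ^ k))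
    (hcomm : Commute (y ^ d) x) : Commute y x ∨ SemiconjBy y x x⁻¹ := by
  have : Fact (orderOf x).Prime := ⟨hx⟩
  have zpow_eq_iff (a b : ℤ) : x ^ a = x ^ b ↔ (a : ZMod (orderOf x)) = b := by
    rw [zpow_eq_zpow_iff_modEq, ZMod.intCast_eq_intCast_iff]
  have hxk : x ^ k ^ d = x ^ (1 : ℤ) := by
    rw [zpow_one]
    exact mul_right_cancel ((semiconjBy_pow_zpow_pow hk d).eq.symm.trans hcomm.eq)
  have hkd : (k : ZMod (orderOf x)) ^ d = 1 := by exact_mod_cast (zpow_eq_iff _ _).1 hxk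
  rw [← ZMod.card (orderOf x)] at hgcd
  refine (eq_one_or_eq_neg_one_of_pow_eq_one hd hgcd hkd).imp (fun h ↦ ?_) fun h ↦ ?_
  · rwa [(zpow_eq_iff k 1).2 (by exact_mod_cast h), zpow_one] at hk
  · rwa [(zpow_eq_iff k (-1)).2 (by exact_mod_cast h), zpow_neg_one] at hk

lemma exists_forall_mem_semiconjBy_zpow (N : Subgroup G) [N.Normal] [IsCyclic N] (y : G) :
    ∃ k : ℤ, ∀ x ∈ N, SemiconjBy y x (x ^ k) := by
  obtain ⟨k, hk⟩ := MonoidHom.map_cyclic (MulAut.conjNormal y : MulAut N).toMonoidHom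
  refine ⟨k, fun x hx ↦ ?_⟩
  have hconj : y * x * y⁻¹ = x ^ k := by simpa using congrArg Subtype.val (hk ⟨x, hx⟩)
  exact hconj ▸ SemiconjBy.conj_mk y x

lemma commute_or_semiconjBy_inv_of_mem (N : Subgroup G) [N.Normal] [IsCyclic N] [N.FiniteIndex]
    (hx : (orderOf x).Prime) (hgcd : N.index.gcd (orderOf x - 1) ∣ 2) (hxN : x ∈ N) (y : G) :
    Commute y x ∨ SemiconjBy y x x⁻¹ := by
  obtain ⟨k, hk⟩ := exists_forall_mem_semiconjBy_zpow N y
  exact commute_or_semiconjBy_inv_of_commute_pow hx N.index_ne_zero_of_finite hgcd (hk x hxN)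
    (setLike_mul_comm (N.pow_index_mem y) hxN)

variable [Finite G]

lemma isCyclic_of_commute_of_coprime_orderOf (hxy : Commute x y)
    (hcop : (orderOf x).Coprime (orderOf y)) (hcard : Nat.card G = orderOf x * orderOf y) :
    IsCyclic G :=
  isCyclic_of_orderOf_eq_card (x * y)
    ((hxy.orderOf_mul_eq_mul_orderOf_of_coprime hcop).trans hcard.symm)

lemma closure_pair_eq_top_of_coprime_orderOf (hcop : (orderOf x).Coprime (orderOf y))
    (hcard : Nat.card G = orderOf x * orderOf y) : Subgroup.closure {x, y} = ⊤ := by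
  have hx : orderOf x ∣ Nat.card (Subgroup.closure {x, y}) :=
    Subgroup.orderOf_dvd_natCard _ (Subgroup.subset_closure (by simp))
  have hy : orderOf y ∣ Nat.card (Subgroup.closure {x, y}) :=
    Subgroup.orderOf_dvd_natCard _ (Subgroup.subset_closure (by simp))
  apply Subgroup.eq_top_of_le_card
  rw [hcard]
  exact Nat.le_of_dvd Nat.card_pos (hcop.mul_dvd_of_dvd_of_dvd hx hy)

end Group

theorem group_12p_structure_general {G : Type*} [Group G] [Finite G] {p : ℕ} (hp : p.Prime)
    (hnc : ¬ IsCyclic G) (N : Subgroup G) [N.Normal] [IsCyclic N] (hpN : p ∣ Nat.card N)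
    (hgcd : N.index.gcd (p - 1) ∣ 2) {y : G} (hcop : p.Coprime (orderOf y))
    (hcard : Nat.card G = p * orderOf y) :
    ∃ x : G, orderOf x = p ∧ y * x * y⁻¹ = x⁻¹ ∧ Subgroup.closure {x, y} = ⊤ := by
  have : Fact p.Prime := ⟨hp⟩
  obtain ⟨⟨x, hxN⟩, hx⟩ := exists_prime_orderOf_dvd_card' (G := N) p hpN
  rw [Subgroup.orderOf_mk] at hx
  subst hx
  refine ⟨x, rfl, ?_, closure_pair_eq_top_of_coprime_orderOf hcop hcard⟩
  rcases commute_or_semiconjBy_inv_of_mem N hp hgcd hxN y with hcomm | hinv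
  · exact absurd (isCyclic_of_commute_of_coprime_orderOf hcomm.symm hcop hcard) hnc
  · exact mul_inv_eq_of_eq_mul hinv.eq

/-- For `p ≥ 13` prime with `p ≡ 3 (mod 4)`, a non-cyclic group of order `12p`
with a normal cyclic subgroup of order `3p` and an element of order 12 is
generated by elements `x` of order `p` and `y` of order 12 with
`y * x * y⁻¹ = x⁻¹` (i.e. it is `ℤ_p ⋊₂ ℤ₁₂`). -/
theorem group_12p_structure (p : ℕ) (hp : p.Prime) (hp13 : 13 ≤ p) (hp4 : p % 4 = 3)
    (G : Type*) [Group G] [Finite G] (hcard : Nat.card G = 12 * p)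
    (hnc : ¬ IsCyclic G)
    (hN : ∃ N : Subgroup G, N.Normal ∧ IsCyclic N ∧ Nat.card N = 3 * p)
    (h12 : ∃ g : G, orderOf g = 12) :
    ∃ x y : G, orderOf x = p ∧ orderOf y = 12 ∧ y * x * y⁻¹ = x⁻¹ ∧
      Subgroup.closure {x, y} = ⊤ := by
  obtain ⟨N, _, _, hNcard⟩ := hN
  obtain ⟨y, hy⟩ := h12
  have hindex : N.index = 4 := by
    have h := N.card_mul_index
    rw [hNcard, hcard] at h
    exact Nat.eq_of_mul_eq_mul_left (by lia : 0 < 3 * p) (by lia)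
  have hgcd : N.index.gcd (p - 1) ∣ 2 := by
    rw [hindex, Nat.gcd_rec, (by lia : (p - 1) % 4 = 2)]
    decide
  have hcop : p.Coprime (orderOf y) := by
    rw [hy, hp.coprime_iff_not_dvd]
    exact Nat.not_dvd_of_pos_of_lt (by simp) (by lia)
  obtain ⟨x, hx, hconj, hgen⟩ := group_12p_structure_general hp hnc N
    (hNcard ▸ dvd_mul_left p 3) hgcd hcop (by rw [hcard, hy, mul_comm])
  exact ⟨x, y, hx, hy, hconj, hgen⟩
end

section
/- Every non-cyclic group of order 315 whose Sylow 3-subgroups are cyclic (of order 9) has a normal Sylow 5-subgroup of order 5. -/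
/-!
The automorphism group of a group of order 5 has order 4, which is prime to 315, so a Sylow
5-subgroup `P` is central in its normalizer and Burnside's transfer theorem gives a normal
complement of order 63. By Sylow counting that complement has a characteristic subgroup `R` of
order 7, so `R` is normal in the whole group and `P ⊔ R` is a subgroup of order 35. Sylow counting
again shows that `P` is normal in `P ⊔ R`, so the number of conjugates of `P` divides
315 / 35 = 9; being congruent to 1 modulo 5, it is 1.
-/

open Subgroup

section BurnsideTransfer

variable {G : Type*} [Group G]

theorem normalizer_le_centralizer_of_coprime_card_mulAut {H : Subgroup G}
    (h : (Nat.card G).Coprime (Nat.card (MulAut H))) :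
    normalizer (H : Set G) ≤ centralizer (H : Set G) := by
  have hdvd_mulAut : (centralizer (H : Set G)).relIndex (normalizer (H : Set G)) ∣
      Nat.card (MulAut H) := by
    have := card_dvd_of_injective _ (QuotientGroup.kerLift_injective H.normalizerMonoidHom)
    rwa [normalizerMonoidHom_ker, ← index, ← relIndex] at this
  have hdvd_card : (centralizer (H : Set G)).relIndex (normalizer (H : Set G)) ∣ Nat.card G :=
    (relIndex_dvd_card _ _).trans (card_subgroup_dvd_card _)
  exact relIndex_eq_one.mp (Nat.eq_one_of_dvd_coprimes h hdvd_card hdvd_mulAut)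

theorem exists_normal_isComplement'_of_coprime_card_mulAut {p : ℕ} [Fact p.Prime]
    (P : Sylow p G) [P.FiniteIndex] (h : (Nat.card G).Coprime (Nat.card (MulAut P))) :
    ∃ K : Subgroup G, K.Normal ∧ K.IsComplement' P :=
  have : Finite (Sylow p G) := P.finite_of_finiteIndex
  ⟨_, MonoidHom.normal_ker _, MonoidHom.ker_transferSylow_isComplement' P
    (normalizer_le_centralizer_of_coprime_card_mulAut h)⟩

end BurnsideTransfer

theorem card_mulAut_of_prime_card {G : Type*} [Group G] {p : ℕ} [Fact p.Prime]
    (hG : Nat.card G = p) : Nat.card (MulAut G) = p - 1 := by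
  have : IsCyclic G := isCyclic_of_prime_card hG
  have : Finite G := Nat.finite_of_card_ne_zero (hG ▸ NeZero.ne p)
  rw [IsCyclic.card_mulAut, hG, Nat.totient_prime Fact.out]

theorem card_sup_of_coprime {G : Type*} [Group G] {H K : Subgroup G} [K.Normal]
    (h : (Nat.card H).Coprime (Nat.card K)) :
    Nat.card (H ⊔ K : Subgroup G) = Nat.card H * Nat.card K := by
  have hrel : K.relIndex (H ⊔ K) = Nat.card H := by
    rw [relIndex_sup_right, ← inf_relIndex_right, (disjoint_of_coprime_natCard h).symm.eq_bot,
      relIndex_bot_left]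
  rw [← relIndex_bot_left (H ⊔ K), ← relIndex_mul_relIndex ⊥ K _ bot_le le_sup_right, hrel,
    relIndex_bot_left, mul_comm]

section SylowCounting

variable {G : Type*} [Group G] [Finite G] {p : ℕ} [Fact p.Prime]

theorem card_sylow_of_card_eq_pow_mul (P : Sylow p G) {k m : ℕ} (hG : Nat.card G = p ^ k * m)
    (hm : ¬ p ∣ m) : Nat.card P = p ^ k := by
  have hcoprime : (Nat.card P).Coprime m := by
    obtain ⟨n, hn⟩ := IsPGroup.iff_card.mp P.2
    exact hn ▸ ((Nat.Prime.coprime_iff_not_dvd Fact.out).mpr hm).pow_left n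
  exact Nat.dvd_antisymm (hcoprime.dvd_of_dvd_mul_right (hG ▸ card_subgroup_dvd_card _))
    (P.pow_dvd_card_of_pow_dvd_card (hG ▸ dvd_mul_right _ _))

theorem subsingleton_sylow_of_card_dvd {m : ℕ} (hm : m ≠ 0) (hdvd : Nat.card (Sylow p G) ∣ m)
    (hone : ∀ d ∈ m.divisors, d ≡ 1 [MOD p] → d = 1) : Subsingleton (Sylow p G) :=
  (Nat.card_eq_one_iff_unique.mp
    (hone _ (Nat.mem_divisors.mpr ⟨hdvd, hm⟩) (card_sylow_modEq_one p G))).1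

theorem subsingleton_sylow_of_card_eq_pow_mul {k m : ℕ} (hG : Nat.card G = p ^ k * m)
    (hm : ¬ p ∣ m) (hone : ∀ d ∈ m.divisors, d ≡ 1 [MOD p] → d = 1) :
    Subsingleton (Sylow p G) := by
  let P : Sylow p G := default
  have hindex : P.index = m := by
    have hmul := P.card_mul_index
    rw [card_sylow_of_card_eq_pow_mul P hG hm, hG] at hmul
    exact Nat.eq_of_mul_eq_mul_left (pow_pos (NeZero.pos p) k) hmul
  exact subsingleton_sylow_of_card_dvd (hindex ▸ index_ne_zero_of_finite)
    (hindex ▸ P.card_dvd_index) hone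

theorem card_sylow_dvd_index_of_subsingleton {P : Sylow p G} {H : Subgroup G} (hPH : P ≤ H)
    [Subsingleton (Sylow p H)] : Nat.card (Sylow p G) ∣ H.index := by
  have hnormal : ((P : Subgroup G).subgroupOf H).Normal := (P.subtype hPH).normal_of_subsingleton
  rw [P.card_eq_index_normalizer]
  exact index_dvd_of_le (le_normalizer_of_normal_subgroupOf hPH)

theorem exists_normal_card_eq_of_coprime_sub_one {m : ℕ} (hG : Nat.card G = p * m)
    (hm : ¬ p ∣ m) (hcoprime : (Nat.card G).Coprime (p - 1)) :
    ∃ K : Subgroup G, K.Normal ∧ Nat.card K = m := by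
  let P : Sylow p G := default
  have hP : Nat.card P = p := by
    simpa only [pow_one] using card_sylow_of_card_eq_pow_mul (k := 1) P (by rwa [pow_one]) hm
  obtain ⟨K, hK, hKP⟩ := exists_normal_isComplement'_of_coprime_card_mulAut P
    (card_mulAut_of_prime_card hP ▸ hcoprime)
  refine ⟨K, hK, Nat.eq_of_mul_eq_mul_right (NeZero.pos p) ?_⟩
  rw [mul_comm m, ← hG, ← hKP.card_mul_card, hP]

theorem exists_normal_card_eq_pow_of_normal {N : Subgroup G} [N.Normal] {k m : ℕ}
    (hN : Nat.card N = p ^ k * m) (hm : ¬ p ∣ m)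
    (hone : ∀ d ∈ m.divisors, d ≡ 1 [MOD p] → d = 1) :
    ∃ R : Subgroup G, R.Normal ∧ Nat.card R = p ^ k := by
  have : Subsingleton (Sylow p N) := subsingleton_sylow_of_card_eq_pow_mul hN hm hone
  let R : Sylow p N := default
  refine ⟨(R : Subgroup N).map N.subtype, ConjAct.normal_of_characteristic_of_normal, ?_⟩
  rw [card_map_of_injective N.subtype_injective, card_sylow_of_card_eq_pow_mul R hN hm]

end SylowCounting

theorem group_315_normal_sylow5_general (G : Type*) [Group G] (hcard : Nat.card G = 315) :
    ∃ P : Sylow 5 G, (P : Subgroup G).Normal ∧ Nat.card (P : Subgroup G) = 5 := by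
  have : Finite G := Nat.finite_of_card_ne_zero (by omega)
  have : Fact (Nat.Prime 5) := ⟨by norm_num⟩
  have : Fact (Nat.Prime 7) := ⟨by norm_num⟩
  let P : Sylow 5 G := default
  have hP : Nat.card P = 5 :=
    card_sylow_of_card_eq_pow_mul (k := 1) (m := 63) P hcard (by norm_num)
  obtain ⟨K, hK, hKcard⟩ := exists_normal_card_eq_of_coprime_sub_one (p := 5) (m := 63)
    hcard (by norm_num) (by rw [hcard]; norm_num)
  obtain ⟨R, hR, hRcard⟩ := exists_normal_card_eq_pow_of_normal (p := 7) (k := 1) (m := 9)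
    hKcard (by norm_num) (by decide)
  have hPR : Nat.card (P ⊔ R : Subgroup G) = 5 * 7 := by
    rw [card_sup_of_coprime (by rw [hP, hRcard]; norm_num), hP, hRcard, pow_one]
  have : Subsingleton (Sylow 5 (P ⊔ R : Subgroup G)) :=
    subsingleton_sylow_of_card_eq_pow_mul (k := 1) hPR (by norm_num) (by decide)
  have hindex : (P ⊔ R : Subgroup G).index = 9 := by
    have hmul := (P ⊔ R : Subgroup G).card_mul_index
    rw [hPR, hcard] at hmul
    omega
  have : Subsingleton (Sylow 5 G) := subsingleton_sylow_of_card_dvd (by norm_num)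
    (hindex ▸ card_sylow_dvd_index_of_subsingleton le_sup_left) (by decide)
  exact ⟨P, P.normal_of_subsingleton, hP⟩

/-- Every non-cyclic group of order 315 whose Sylow 3-subgroups are cyclic has a
normal Sylow 5-subgroup of order 5. -/
theorem group_315_normal_sylow5 (G : Type*) [Group G] [Finite G]
    (hcard : Nat.card G = 315) (hnc : ¬ IsCyclic G)
    (hsyl : ∀ P : Sylow 3 G, IsCyclic (P : Subgroup G)) :
    ∃ P : Sylow 5 G, (P : Subgroup G).Normal ∧ Nat.card (P : Subgroup G) = 5 :=
  group_315_normal_sylow5_general G hcard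
end
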